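/- ∫₀¹ (2+3k-k²)/√(1+k) · K(k)³ dk = Γ(1/8)⁴ Γ(3/8)⁴ / (384√2 π²). -/

import Mathlib

open scoped Real
open MeasureTheory

noncomputable def EllK (k : ℝ) : ℝ :=
  ∫ x in (0:ℝ)..(1:ℝ), 1 / Real.sqrt ((1 - x^2) * (1 - k^2 * x^2))

noncomputable def EllE (k : ℝ) : ℝ :=
  ∫ x in (0:ℝ)..(1:ℝ), Real.sqrt ((1 - k^2 * x^2) / (1 - x^2))

noncomputable def EllK' (k : ℝ) : ℝ := EllK (Real.sqrt (1 - k^2))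

/-!
With `s` the parameter of the nome `q = exp (-π s)`, Jacobi's `K = (π / 2) θ₃(2 * s)²` turns the
left hand side into `(π⁴ / 2) ∫ Θ(s) ds`, where `Θ`, a Rankin–Cohen bracket of `θ₃(s)` and
`θ₃(2 * s)`, is the theta series `∑ Re (m + i√2 n)⁴ exp (-π s |m + i√2 n|²)`. The Fricke involution
replaces `∫ Θ` by a multiple of `∫ s³ Θ`, and integrating this termwise gives the Eisenstein series
`∑ (m + i√2 n)⁻⁴ = (π⁴ / 45) E₄(i√2)`. As level one forms of weight four make up a line,
`E₄ = (θ₂⁸ + θ₃⁸ + θ₄⁸) / 2`, and the value of `θ₃(i√2)` is a Beta integral by Gauss's evaluation of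
the arithmetic-geometric mean.

Both the differential equations of the theta constants and `agm(θ₃², θ₄²) = 1` rest on the same
observation: a quantity invariant under `s ↦ 2 * s` that has a limit at infinity is constant.
-/

open Filter Topology

/-! ### Theta constants and their moments -/

/-- The `j`-th moment `∑ c n * n ^ (2 * j) * exp (-π * n ^ 2 * s)` of a theta series on the
imaginary axis; up to the factor `(-π) ^ j` it is the `j`-th derivative of the zeroth one. -/
noncomputable def thetaMoment (c : ℤ → ℝ) (j : ℕ) (s : ℝ) : ℝ :=
  ∑' n : ℤ, c n * (n : ℝ) ^ (2 * j) * Real.exp (-π * (n : ℝ) ^ 2 * s)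

lemma summable_pow_mul_exp_neg_sq (j : ℕ) {s : ℝ} (hs : 0 < s) :
    Summable fun n : ℤ => (n : ℝ) ^ (2 * j) * Real.exp (-π * (n : ℝ) ^ 2 * s) := by
  refine (summable_pow_mul_jacobiTheta₂_term_bound 0 hs (2 * j)).congr fun n => ?_
  simp only [mul_zero, zero_mul, sub_zero, Int.cast_abs, (even_two_mul j).pow_abs]
  ring_nf

section BoundedCoefficients

variable {c d : ℤ → ℝ} {C D : ℝ}

lemma norm_mul_pow_mul_exp_le (hc : ∀ n, |c n| ≤ C) (j : ℕ) (n : ℤ) (x : ℝ) :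
    ‖c n * (n : ℝ) ^ (2 * j) * Real.exp x‖ ≤ C * ((n : ℝ) ^ (2 * j) * Real.exp x) := by
  rw [norm_mul, norm_mul, Real.norm_eq_abs, Real.norm_eq_abs, Real.norm_eq_abs, Real.abs_exp,
    abs_of_nonneg ((even_two_mul j).pow_nonneg (n : ℝ)), mul_assoc]
  gcongr
  · exact mul_nonneg ((even_two_mul j).pow_nonneg _) (Real.exp_pos x).le
  · exact hc n

lemma summable_thetaMoment (hc : ∀ n, |c n| ≤ C) (j : ℕ) {s : ℝ} (hs : 0 < s) :
    Summable fun n : ℤ => c n * (n : ℝ) ^ (2 * j) * Real.exp (-π * (n : ℝ) ^ 2 * s) :=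
  ((summable_pow_mul_exp_neg_sq j hs).mul_left C).of_norm_bounded
    fun n => norm_mul_pow_mul_exp_le hc j n _

lemma summable_thetaMoment_mul (hc : ∀ n, |c n| ≤ C) (hd : ∀ n, |d n| ≤ D) (i j : ℕ) {s t : ℝ}
    (hs : 0 < s) (ht : 0 < t) :
    Summable fun p : ℤ × ℤ => c p.1 * d p.2 * (p.1 : ℝ) ^ (2 * i) * (p.2 : ℝ) ^ (2 * j) *
      Real.exp (-π * (p.1 ^ 2 * s + p.2 ^ 2 * t)) := by
  refine (summable_mul_of_summable_norm (summable_thetaMoment hc i hs).norm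
    (summable_thetaMoment hd j ht).norm).congr fun p => ?_
  rw [mul_add, Real.exp_add]
  ring_nf

lemma thetaMoment_mul_thetaMoment (hc : ∀ n, |c n| ≤ C) (hd : ∀ n, |d n| ≤ D) (i j : ℕ) {s t : ℝ}
    (hs : 0 < s) (ht : 0 < t) :
    thetaMoment c i s * thetaMoment d j t =
      ∑' p : ℤ × ℤ, c p.1 * d p.2 * (p.1 : ℝ) ^ (2 * i) * (p.2 : ℝ) ^ (2 * j) *
        Real.exp (-π * (p.1 ^ 2 * s + p.2 ^ 2 * t)) := by
  rw [thetaMoment, thetaMoment, tsum_mul_tsum_of_summable_norm (summable_thetaMoment hc i hs).norm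
    (summable_thetaMoment hd j ht).norm]
  refine tsum_congr fun p => ?_
  rw [mul_add, Real.exp_add]
  ring_nf

lemma hasDerivAt_thetaMoment (hc : ∀ n, |c n| ≤ C) (j : ℕ) {s : ℝ} (hs : 0 < s) :
    HasDerivAt (thetaMoment c j) (-π * thetaMoment c (j + 1) s) s := by
  have hC : 0 ≤ C := (abs_nonneg _).trans (hc 0)
  have hs_mem : s ∈ Set.Ioi (s / 2) := half_lt_self hs
  have hterm (n : ℤ) (y : ℝ) :
      HasDerivAt (fun y => c n * (n : ℝ) ^ (2 * j) * Real.exp (-π * (n : ℝ) ^ 2 * y))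
        (-π * (c n * (n : ℝ) ^ (2 * (j + 1)) * Real.exp (-π * (n : ℝ) ^ 2 * y))) y := by
    refine (((hasDerivAt_id y).const_mul (-π * (n : ℝ) ^ 2)).exp.const_mul
      (c n * (n : ℝ) ^ (2 * j))).congr_deriv ?_
    simp only [id_eq]
    ring
  have hbound (n : ℤ) (y : ℝ) (hy : y ∈ Set.Ioi (s / 2)) :
      ‖-π * (c n * (n : ℝ) ^ (2 * (j + 1)) * Real.exp (-π * (n : ℝ) ^ 2 * y))‖ ≤
        π * (C * ((n : ℝ) ^ (2 * (j + 1)) * Real.exp (-π * (n : ℝ) ^ 2 * (s / 2)))) := by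
    rw [norm_mul, norm_neg, Real.norm_of_nonneg Real.pi_pos.le]
    gcongr
    refine (norm_mul_pow_mul_exp_le hc (j + 1) n _).trans ?_
    have : 0 ≤ (n : ℝ) ^ (2 * (j + 1)) := (even_two_mul _).pow_nonneg _
    gcongr C * (_ * Real.exp ?_)
    nlinarith [mul_nonneg Real.pi_pos.le (sq_nonneg (n : ℝ)), Set.mem_Ioi.1 hy]
  rw [thetaMoment, ← tsum_mul_left]
  exact hasDerivAt_tsum_of_isPreconnected
    (((summable_pow_mul_exp_neg_sq (j + 1) (half_pos hs)).mul_left C).mul_left π)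
    isOpen_Ioi isPreconnected_Ioi (fun n y _ => hterm n y) hbound hs_mem
    (summable_thetaMoment hc j hs) hs_mem

lemma exp_mul_thetaMoment_sub (hc : ∀ n, |c n| ≤ C) (j : ℕ) {s : ℝ} (hs : 0 < s) :
    Real.exp (π * s) * (thetaMoment c j s - c 0 * 0 ^ (2 * j)) =
      ∑' n : ℤ, if n = 0 then 0 else
        c n * (n : ℝ) ^ (2 * j) * Real.exp (-(π * ((n : ℝ) ^ 2 - 1)) * s) := by
  rw [thetaMoment, (summable_thetaMoment hc j hs).tsum_eq_add_tsum_ite 0]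
  simp only [Int.cast_zero, ne_eq, OfNat.ofNat_ne_zero, not_false_eq_true, zero_pow, mul_zero,
    zero_mul, Real.exp_zero, mul_one, add_sub_cancel_left]
  rw [← tsum_mul_left]
  refine tsum_congr fun n => ?_
  split_ifs
  · rw [mul_zero]
  · rw [mul_left_comm, ← Real.exp_add]
    ring_nf

lemma one_le_int_cast_sq {n : ℤ} (hn : n ≠ 0) : (1 : ℝ) ≤ (n : ℝ) ^ 2 := by
  exact_mod_cast Int.add_one_le_of_lt (sq_pos_of_ne_zero hn)

lemma tendsto_exp_neg_mul_int_sq_sub_one {n : ℤ} (hn : n ≠ 0) :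
    Tendsto (fun s : ℝ => Real.exp (-(π * ((n : ℝ) ^ 2 - 1)) * s)) atTop
      (𝓝 (if (n : ℝ) ^ 2 = 1 then 1 else 0)) := by
  split_ifs with h
  · simp [h]
  · have hpos : 0 < π * ((n : ℝ) ^ 2 - 1) :=
      mul_pos Real.pi_pos (sub_pos.2 ((one_le_int_cast_sq hn).lt_of_ne' h))
    refine (Real.tendsto_exp_neg_atTop_nhds_zero.comp (tendsto_id.const_mul_atTop hpos)).congr
      fun s => ?_
    simp only [Function.comp_apply, id_eq, neg_mul]

lemma tendsto_exp_mul_thetaMoment_sub (hc : ∀ n, |c n| ≤ C) (j : ℕ) :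
    Tendsto (fun s => Real.exp (π * s) * (thetaMoment c j s - c 0 * 0 ^ (2 * j))) atTop
      (𝓝 (c 1 + c (-1))) := by
  have hC : 0 ≤ C := (abs_nonneg _).trans (hc 0)
  have hlim : ∑' n : ℤ, (if n = 0 then 0 else
      c n * (n : ℝ) ^ (2 * j) * if (n : ℝ) ^ 2 = 1 then 1 else 0) = c 1 + c (-1) := by
    rw [tsum_eq_sum (s := {1, -1}) fun n hn => ?_, Finset.sum_pair (by norm_num)]
    · simp [(even_two_mul j).neg_one_pow]
    · have hsq : (n : ℝ) ^ 2 ≠ 1 := by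
        rw [Ne, sq_eq_one_iff]
        exact_mod_cast fun h => hn (by simpa using h)
      simp [hsq]
  have hbound (s : ℝ) (hs : 1 ≤ s) (n : ℤ) : ‖if n = 0 then 0 else
      c n * (n : ℝ) ^ (2 * j) * Real.exp (-(π * ((n : ℝ) ^ 2 - 1)) * s)‖ ≤
        C * (Real.exp π * ((n : ℝ) ^ (2 * j) * Real.exp (-π * (n : ℝ) ^ 2 * 1))) := by
    have hpow : 0 ≤ (n : ℝ) ^ (2 * j) := (even_two_mul j).pow_nonneg _
    split_ifs with hn
    · rw [norm_zero]
      positivity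
    · refine (norm_mul_pow_mul_exp_le hc j n _).trans ?_
      rw [mul_left_comm (Real.exp π), ← Real.exp_add]
      gcongr C * (_ * Real.exp ?_)
      nlinarith [mul_nonneg Real.pi_pos.le
        (mul_nonneg (sub_nonneg.2 (one_le_int_cast_sq hn)) (sub_nonneg.2 hs))]
  rw [← hlim]
  refine (tendsto_tsum_of_dominated_convergence
    (((summable_pow_mul_exp_neg_sq j one_pos).mul_left (Real.exp π)).mul_left C) (fun n => ?_)
    ((eventually_ge_atTop 1).mono hbound)).congr' ?_
  · by_cases hn : n = 0
    · simp only [if_pos hn, tendsto_const_nhds]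
    · simp only [if_neg hn]
      exact (tendsto_exp_neg_mul_int_sq_sub_one hn).const_mul _
  · filter_upwards [eventually_gt_atTop 0] with s hs using (exp_mul_thetaMoment_sub hc j hs).symm

end BoundedCoefficients

/-- The moments of Jacobi's `θ₃(q) = ∑ q ^ n ^ 2` at the nome `q = exp (-π s)`. -/
noncomputable def theta₃ : ℕ → ℝ → ℝ := thetaMoment fun _ => 1

/-- The moments of Jacobi's `θ₄(q) = ∑ (-1) ^ n * q ^ n ^ 2` at the nome `q = exp (-π s)`. -/
noncomputable def theta₄ : ℕ → ℝ → ℝ := thetaMoment fun n => (-1) ^ n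

lemma abs_one_le_one : ∀ _ : ℤ, |(1 : ℝ)| ≤ 1 := fun _ => abs_one.le

lemma abs_neg_one_zpow_le_one (n : ℤ) : |(-1 : ℝ) ^ n| ≤ 1 := (abs_neg_one_zpow n).le

lemma hasDerivAt_theta₃ (j : ℕ) {s : ℝ} (hs : 0 < s) :
    HasDerivAt (theta₃ j) (-π * theta₃ (j + 1) s) s :=
  hasDerivAt_thetaMoment abs_one_le_one j hs

lemma hasDerivAt_theta₄ (j : ℕ) {s : ℝ} (hs : 0 < s) :
    HasDerivAt (theta₄ j) (-π * theta₄ (j + 1) s) s :=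
  hasDerivAt_thetaMoment abs_neg_one_zpow_le_one j hs

lemma theta₃_zero_eq (s : ℝ) : theta₃ 0 s = ∑' n : ℤ, Real.exp (-π * (n : ℝ) ^ 2 * s) := by
  simp [theta₃, thetaMoment]

lemma theta₄_zero_eq (s : ℝ) :
    theta₄ 0 s = ∑' n : ℤ, (-1) ^ n * Real.exp (-π * (n : ℝ) ^ 2 * s) := by
  simp [theta₄, thetaMoment]

lemma tsum_add_sub_eq_of_odd {F : ℤ × ℤ → ℝ} (hF : ∀ p : ℤ × ℤ, Odd (p.1 + p.2) → F p = 0) :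
    ∑' p : ℤ × ℤ, F (p.1 + p.2, p.1 - p.2) = ∑' p, F p := by
  refine Function.Injective.tsum_eq (g := fun p : ℤ × ℤ => (p.1 + p.2, p.1 - p.2)) ?_ ?_
  · rintro ⟨a, b⟩ ⟨c, d⟩ h
    simp only [Prod.mk.injEq] at h ⊢
    omega
  · rintro ⟨m, n⟩ h
    rcases Int.even_or_odd (m + n) with ⟨k, hk⟩ | ho
    · exact ⟨(k, m - k), by simp only [Prod.mk.injEq]; omega⟩
    · exact absurd (hF _ ho) h

lemma exp_add_sub_sq (p q : ℤ) (s : ℝ) :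
    Real.exp (-π * (((p + q : ℤ) : ℝ) ^ 2 * s + ((p - q : ℤ) : ℝ) ^ 2 * s)) =
      Real.exp (-π * (p ^ 2 * (2 * s) + q ^ 2 * (2 * s))) := by
  push_cast
  ring_nf

lemma neg_one_zpow_mul_self (m : ℤ) : (-1 : ℝ) ^ m * (-1) ^ m = 1 := by
  rw [← mul_zpow, neg_one_mul, neg_neg, one_zpow]

lemma neg_one_zpow_sub (p q : ℤ) : (-1 : ℝ) ^ (p - q) = (-1) ^ (p + q) := by
  rw [show p + q = p - q + 2 * q by ring, zpow_add₀ (by norm_num), (even_two_mul q).neg_one_zpow,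
    mul_one]

lemma neg_one_zpow_of_odd_add {m n : ℤ} (h : Odd (m + n)) : (-1 : ℝ) ^ n = -(-1) ^ m := by
  have hmul : (-1 : ℝ) ^ (m + n) = -1 := h.neg_one_zpow
  rw [zpow_add₀ (by norm_num)] at hmul
  rcases Int.even_or_odd m with hm | hm <;> rw [hm.neg_one_zpow] at hmul ⊢ <;> linarith

lemma theta₃_sq_add_theta₄_sq {s : ℝ} (hs : 0 < s) :
    theta₃ 0 s ^ 2 + theta₄ 0 s ^ 2 = 2 * theta₃ 0 (2 * s) ^ 2 := by
  have hs2 : 0 < 2 * s := mul_pos two_pos hs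
  rw [sq, sq, sq, theta₃, theta₄,
    thetaMoment_mul_thetaMoment abs_one_le_one abs_one_le_one 0 0 hs hs,
    thetaMoment_mul_thetaMoment abs_neg_one_zpow_le_one abs_neg_one_zpow_le_one 0 0 hs hs,
    thetaMoment_mul_thetaMoment abs_one_le_one abs_one_le_one 0 0 hs2 hs2,
    ← (summable_thetaMoment_mul abs_one_le_one abs_one_le_one 0 0 hs hs).tsum_add
      (summable_thetaMoment_mul abs_neg_one_zpow_le_one abs_neg_one_zpow_le_one 0 0 hs hs),
    ← tsum_mul_left, ← tsum_add_sub_eq_of_odd fun p hp => ?_]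
  · refine tsum_congr fun p => ?_
    simp only [exp_add_sub_sq, neg_one_zpow_sub, neg_one_zpow_mul_self]
    ring
  · simp only [neg_one_zpow_of_odd_add hp, mul_neg, neg_one_zpow_mul_self]
    ring

lemma theta₃_mul_theta₄ {s : ℝ} (hs : 0 < s) :
    theta₃ 0 s * theta₄ 0 s = theta₄ 0 (2 * s) ^ 2 := by
  have hs2 : 0 < 2 * s := mul_pos two_pos hs
  suffices theta₃ 0 s * theta₄ 0 s + theta₄ 0 s * theta₃ 0 s = 2 * theta₄ 0 (2 * s) ^ 2 by
    linarith
  rw [sq, theta₃, theta₄,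
    thetaMoment_mul_thetaMoment abs_one_le_one abs_neg_one_zpow_le_one 0 0 hs hs,
    thetaMoment_mul_thetaMoment abs_neg_one_zpow_le_one abs_one_le_one 0 0 hs hs,
    thetaMoment_mul_thetaMoment abs_neg_one_zpow_le_one abs_neg_one_zpow_le_one 0 0 hs2 hs2,
    ← (summable_thetaMoment_mul abs_one_le_one abs_neg_one_zpow_le_one 0 0 hs hs).tsum_add
      (summable_thetaMoment_mul abs_neg_one_zpow_le_one abs_one_le_one 0 0 hs hs),
    ← tsum_mul_left, ← tsum_add_sub_eq_of_odd fun p hp => ?_]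
  · refine tsum_congr fun p => ?_
    simp only [exp_add_sub_sq, neg_one_zpow_sub, zpow_add₀ (neg_ne_zero.2 (one_ne_zero (α := ℝ)))]
    ring
  · simp only [neg_one_zpow_of_odd_add hp]
    ring

lemma theta₃_inv {s : ℝ} (hs : 0 < s) : theta₃ 0 s⁻¹ = √s * theta₃ 0 s := by
  have h := Real.tsum_exp_neg_mul_int_sq (inv_pos.2 hs)
  rw [div_inv_eq_mul, ← Real.sqrt_eq_rpow, Real.sqrt_inv, one_div, inv_inv] at h
  simpa only [theta₃_zero_eq, mul_right_comm] using h

lemma one_le_theta₃ {s : ℝ} (hs : 0 < s) : 1 ≤ theta₃ 0 s := by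
  simpa [theta₃, thetaMoment] using
    (summable_thetaMoment abs_one_le_one 0 hs).le_tsum 0 fun n _ => by
      simp [Real.exp_nonneg]

lemma theta₃_pos {s : ℝ} (hs : 0 < s) : 0 < theta₃ 0 s :=
  one_pos.trans_le (one_le_theta₃ hs)

lemma theta₄_lt_theta₃ {s : ℝ} (hs : 0 < s) : theta₄ 0 s < theta₃ 0 s := by
  refine Summable.tsum_lt_tsum (i := 1) (fun n => ?_) ?_
    (summable_thetaMoment abs_neg_one_zpow_le_one 0 hs) (summable_thetaMoment abs_one_le_one 0 hs)
  · gcongr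
    · exact (even_two_mul 0).pow_nonneg _
    · exact (abs_le.1 (abs_neg_one_zpow_le_one n)).2
  · have := Real.exp_pos (-(π * s))
    norm_num
    linarith

lemma tendsto_exp_mul_theta₃_sub_one :
    Tendsto (fun s => Real.exp (π * s) * (theta₃ 0 s - 1)) atTop (𝓝 2) := by
  have h := tendsto_exp_mul_thetaMoment_sub abs_one_le_one 0
  norm_num at h
  exact h

lemma tendsto_exp_mul_theta₄_sub_one :
    Tendsto (fun s => Real.exp (π * s) * (theta₄ 0 s - 1)) atTop (𝓝 (-2)) := by
  have h := tendsto_exp_mul_thetaMoment_sub abs_neg_one_zpow_le_one 0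
  norm_num at h
  exact h

lemma tendsto_exp_mul_theta₃_succ (j : ℕ) :
    Tendsto (fun s => Real.exp (π * s) * theta₃ (j + 1) s) atTop (𝓝 2) := by
  have h := tendsto_exp_mul_thetaMoment_sub abs_one_le_one (j + 1)
  norm_num at h
  exact h

lemma tendsto_exp_mul_theta₄_succ (j : ℕ) :
    Tendsto (fun s => Real.exp (π * s) * theta₄ (j + 1) s) atTop (𝓝 (-2)) := by
  have h := tendsto_exp_mul_thetaMoment_sub abs_neg_one_zpow_le_one (j + 1)
  norm_num at h
  exact h

lemma tendsto_pow_mul_of_tendsto_exp_mul {f : ℝ → ℝ} {l : ℝ} (k : ℕ)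
    (h : Tendsto (fun s => Real.exp (π * s) * f s) atTop (𝓝 l)) :
    Tendsto (fun s => s ^ k * f s) atTop (𝓝 0) := by
  have hpow : Tendsto (fun s : ℝ => s ^ k * Real.exp (-π * s)) atTop (𝓝 0) := by
    simpa using tendsto_rpow_mul_exp_neg_mul_atTop_nhds_zero k π Real.pi_pos
  have hmul := hpow.mul h
  rw [zero_mul] at hmul
  refine hmul.congr fun s => ?_
  rw [mul_assoc, ← mul_assoc (Real.exp _), ← Real.exp_add]
  simp

lemma tendsto_zero_of_tendsto_exp_mul {f : ℝ → ℝ} {l : ℝ}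
    (h : Tendsto (fun s => Real.exp (π * s) * f s) atTop (𝓝 l)) : Tendsto f atTop (𝓝 0) := by
  simpa using tendsto_pow_mul_of_tendsto_exp_mul 0 h

lemma tendsto_theta₃ : Tendsto (theta₃ 0) atTop (𝓝 1) := by
  simpa using (tendsto_zero_of_tendsto_exp_mul tendsto_exp_mul_theta₃_sub_one).add_const 1

lemma tendsto_theta₄ : Tendsto (theta₄ 0) atTop (𝓝 1) := by
  simpa using (tendsto_zero_of_tendsto_exp_mul tendsto_exp_mul_theta₄_sub_one).add_const 1

lemma tendsto_exp_mul_theta₃_pow_four_sub_theta₄_pow_four :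
    Tendsto (fun s => Real.exp (π * s) * (theta₃ 0 s ^ 4 - theta₄ 0 s ^ 4)) atTop (𝓝 16) := by
  have h := ((tendsto_exp_mul_theta₃_sub_one.sub tendsto_exp_mul_theta₄_sub_one).mul
    (tendsto_theta₃.add tendsto_theta₄)).mul ((tendsto_theta₃.pow 2).add (tendsto_theta₄.pow 2))
  norm_num at h
  exact h.congr fun s => by ring

lemma eq_of_doubling_invariant {f : ℝ → ℝ} {l : ℝ} (hf : ∀ s, 0 < s → f (2 * s) = f s)
    (hl : Tendsto f atTop (𝓝 l)) {s : ℝ} (hs : 0 < s) : f s = l := by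
  have hiter (n : ℕ) : f s = f (2 ^ n * s) := by
    induction n with
    | zero => rw [pow_zero, one_mul]
    | succ n ih => rw [ih, pow_succ', mul_assoc, hf _ (by positivity)]
  have hatTop : Tendsto (fun n : ℕ => 2 ^ n * s) atTop atTop :=
    (tendsto_pow_atTop_atTop_of_one_lt one_lt_two).atTop_mul_const hs
  exact tendsto_nhds_unique (tendsto_const_nhds.congr hiter) (hl.comp hatTop)

lemma theta₄_pos {s : ℝ} (hs : 0 < s) : 0 < theta₄ 0 s := by
  have hnonneg : 0 ≤ theta₄ 0 s :=
    nonneg_of_mul_nonneg_right (theta₃_mul_theta₄ hs ▸ sq_nonneg _) (theta₃_pos hs)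
  have hzero : (if theta₄ 0 s = 0 then 1 else 0 : ℝ) = 0 := by
    refine eq_of_doubling_invariant (f := fun s => if theta₄ 0 s = 0 then 1 else 0)
      (fun t ht => ?_) (tendsto_const_nhds.congr' ?_) hs
    · have hiff : theta₄ 0 (2 * t) = 0 ↔ theta₄ 0 t = 0 := by
        rw [← sq_eq_zero_iff, ← theta₃_mul_theta₄ ht, mul_eq_zero_iff_left (theta₃_pos ht).ne']
      simp only [hiff]
    · filter_upwards [tendsto_theta₄.eventually_ne one_ne_zero] with t ht using (if_neg ht).symm
  exact hnonneg.lt_of_ne' fun h => by simp [h] at hzero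

lemma theta₄_sq_lt_theta₃_sq {s : ℝ} (hs : 0 < s) : theta₄ 0 s ^ 2 < theta₃ 0 s ^ 2 :=
  pow_lt_pow_left₀ (theta₄_lt_theta₃ hs) (theta₄_pos hs).le two_ne_zero

lemma theta₄_pow_four_lt_theta₃_pow_four {s : ℝ} (hs : 0 < s) : theta₄ 0 s ^ 4 < theta₃ 0 s ^ 4 :=
  pow_lt_pow_left₀ (theta₄_lt_theta₃ hs) (theta₄_pos hs).le four_ne_zero

/-! ### Differential equations of the theta constants -/

lemma eq_of_hasDerivAt_of_eqOn_pos {f g : ℝ → ℝ} {f' g' s : ℝ} (hs : 0 < s)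
    (h : ∀ t, 0 < t → f t = g t) (hf : HasDerivAt f f' s) (hg : HasDerivAt g g' s) : f' = g' :=
  hf.unique (hg.congr_of_eventuallyEq ((lt_mem_nhds hs).mono h))

lemma hasDerivAt_theta₃_two_mul (j : ℕ) {s : ℝ} (hs : 0 < s) :
    HasDerivAt (fun t => theta₃ j (2 * t)) (-(2 * π) * theta₃ (j + 1) (2 * s)) s :=
  ((hasDerivAt_theta₃ j (mul_pos two_pos hs)).comp s
    ((hasDerivAt_id s).const_mul 2)).congr_deriv (by ring)

lemma hasDerivAt_theta₄_two_mul (j : ℕ) {s : ℝ} (hs : 0 < s) :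
    HasDerivAt (fun t => theta₄ j (2 * t)) (-(2 * π) * theta₄ (j + 1) (2 * s)) s :=
  ((hasDerivAt_theta₄ j (mul_pos two_pos hs)).comp s
    ((hasDerivAt_id s).const_mul 2)).congr_deriv (by ring)

lemma theta₃_zero_mul_one_add_theta₄_zero_mul_one {s : ℝ} (hs : 0 < s) :
    theta₃ 0 s * theta₃ 1 s + theta₄ 0 s * theta₄ 1 s =
      4 * (theta₃ 0 (2 * s) * theta₃ 1 (2 * s)) := by
  have h := eq_of_hasDerivAt_of_eqOn_pos hs (fun t ht => theta₃_sq_add_theta₄_sq ht)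
    (((hasDerivAt_theta₃ 0 hs).fun_pow 2).fun_add ((hasDerivAt_theta₄ 0 hs).fun_pow 2))
    (((hasDerivAt_theta₃_two_mul 0 hs).fun_pow 2).const_mul 2)
  norm_num at h
  refine mul_left_cancel₀ (mul_ne_zero two_ne_zero Real.pi_ne_zero) ?_
  linear_combination -h

lemma theta₃_one_mul_theta₄_add {s : ℝ} (hs : 0 < s) :
    theta₃ 1 s * theta₄ 0 s + theta₃ 0 s * theta₄ 1 s =
      4 * (theta₄ 0 (2 * s) * theta₄ 1 (2 * s)) := by
  have h := eq_of_hasDerivAt_of_eqOn_pos hs (fun t ht => theta₃_mul_theta₄ ht)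
    ((hasDerivAt_theta₃ 0 hs).fun_mul (hasDerivAt_theta₄ 0 hs))
    ((hasDerivAt_theta₄_two_mul 0 hs).fun_pow 2)
  norm_num at h
  refine mul_left_cancel₀ Real.pi_ne_zero ?_
  linear_combination -h

/-- The Wronskian of `θ₃` and `θ₄`, up to the factor `-π`. -/
noncomputable def thetaWronskian (s : ℝ) : ℝ := theta₃ 1 s * theta₄ 0 s - theta₃ 0 s * theta₄ 1 s

lemma thetaWronskian_two_mul {s : ℝ} (hs : 0 < s) :
    8 * (theta₃ 0 (2 * s) * theta₄ 0 (2 * s)) * thetaWronskian (2 * s) =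
      (theta₃ 0 s ^ 2 - theta₄ 0 s ^ 2) * thetaWronskian s := by
  rw [thetaWronskian, thetaWronskian]
  linear_combination
    -2 * (theta₃ 0 s * theta₄ 0 s) * theta₃_zero_mul_one_add_theta₄_zero_mul_one hs +
    (theta₃ 0 s ^ 2 + theta₄ 0 s ^ 2) * theta₃_one_mul_theta₄_add hs +
    4 * (theta₄ 0 (2 * s) * theta₄ 1 (2 * s)) * theta₃_sq_add_theta₄_sq hs -
    8 * (theta₃ 0 (2 * s) * theta₃ 1 (2 * s)) * theta₃_mul_theta₄ hs

lemma theta₃_pow_four_sub_theta₄_pow_four_two_mul {s : ℝ} (hs : 0 < s) :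
    4 * (theta₃ 0 (2 * s) ^ 4 - theta₄ 0 (2 * s) ^ 4) = (theta₃ 0 s ^ 2 - theta₄ 0 s ^ 2) ^ 2 := by
  linear_combination
    -(2 * theta₃ 0 (2 * s) ^ 2 + theta₃ 0 s ^ 2 + theta₄ 0 s ^ 2) * theta₃_sq_add_theta₄_sq hs +
    4 * (theta₄ 0 (2 * s) ^ 2 + theta₃ 0 s * theta₄ 0 s) * theta₃_mul_theta₄ hs

lemma theta₃_mul_theta₄_mul_sub_two_mul {s : ℝ} (hs : 0 < s) :
    8 * (theta₃ 0 (2 * s) * theta₄ 0 (2 * s)) *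
        (theta₃ 0 (2 * s) * theta₄ 0 (2 * s) * (theta₃ 0 (2 * s) ^ 4 - theta₄ 0 (2 * s) ^ 4)) =
      (theta₃ 0 s ^ 2 - theta₄ 0 s ^ 2) *
        (theta₃ 0 s * theta₄ 0 s * (theta₃ 0 s ^ 4 - theta₄ 0 s ^ 4)) := by
  linear_combination
    2 * (theta₃ 0 (2 * s) * theta₄ 0 (2 * s)) ^ 2 *
      theta₃_pow_four_sub_theta₄_pow_four_two_mul hs -
    2 * theta₃ 0 (2 * s) ^ 2 * (theta₃ 0 s ^ 2 - theta₄ 0 s ^ 2) ^ 2 * theta₃_mul_theta₄ hs -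
    theta₃ 0 s * theta₄ 0 s * (theta₃ 0 s ^ 2 - theta₄ 0 s ^ 2) ^ 2 * theta₃_sq_add_theta₄_sq hs

lemma tendsto_exp_mul_thetaWronskian :
    Tendsto (fun s => Real.exp (π * s) * thetaWronskian s) atTop (𝓝 4) := by
  have h := ((tendsto_exp_mul_theta₃_succ 0).mul tendsto_theta₄).sub
    (tendsto_theta₃.mul (tendsto_exp_mul_theta₄_succ 0))
  norm_num at h
  refine h.congr fun s => ?_
  rw [thetaWronskian]
  ring

lemma four_mul_thetaWronskian {s : ℝ} (hs : 0 < s) :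
    4 * thetaWronskian s =
      theta₃ 0 s * theta₄ 0 s * (theta₃ 0 s ^ 4 - theta₄ 0 s ^ 4) := by
  have hne (t : ℝ) (ht : 0 < t) :
      theta₃ 0 t * theta₄ 0 t * (theta₃ 0 t ^ 4 - theta₄ 0 t ^ 4) ≠ 0 :=
    (mul_pos (mul_pos (theta₃_pos ht) (theta₄_pos ht))
      (sub_pos.2 (theta₄_pow_four_lt_theta₃_pow_four ht))).ne'
  refine (div_eq_one_iff_eq (hne s hs)).1 (eq_of_doubling_invariant (f := fun s =>
    4 * thetaWronskian s / (theta₃ 0 s * theta₄ 0 s * (theta₃ 0 s ^ 4 - theta₄ 0 s ^ 4)))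
    (fun t ht => ?_) ?_ hs)
  · have ht2 : 0 < 2 * t := mul_pos two_pos ht
    have hscale : 8 * (theta₃ 0 (2 * t) * theta₄ 0 (2 * t)) ≠ 0 :=
      (mul_pos (by norm_num) (mul_pos (theta₃_pos ht2) (theta₄_pos ht2))).ne'
    rw [← mul_div_mul_left _ _ hscale,
      theta₃_mul_theta₄_mul_sub_two_mul ht, mul_left_comm, thetaWronskian_two_mul ht,
      mul_left_comm, mul_div_mul_left _ _ (sub_pos.2 (theta₄_sq_lt_theta₃_sq ht)).ne']
  · have hden := (tendsto_theta₃.mul tendsto_theta₄).mul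
      tendsto_exp_mul_theta₃_pow_four_sub_theta₄_pow_four
    have hdiv := (tendsto_exp_mul_thetaWronskian.const_mul 4).div hden (by norm_num)
    norm_num at hdiv
    refine hdiv.congr fun s => ?_
    rw [Pi.div_apply, mul_left_comm 4, mul_left_comm (theta₃ 0 s * theta₄ 0 s),
      mul_div_mul_left _ _ (Real.exp_ne_zero (π * s))]

lemma theta₄_one_div {s : ℝ} (hs : 0 < s) :
    theta₄ 1 s / theta₄ 0 s =
      theta₃ 1 s / theta₃ 0 s - (theta₃ 0 s ^ 4 - theta₄ 0 s ^ 4) / 4 := by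
  have h₃ := (theta₃_pos hs).ne'
  have h₄ := (theta₄_pos hs).ne'
  have hW := four_mul_thetaWronskian hs
  rw [thetaWronskian] at hW
  field_simp
  linear_combination -hW

lemma theta₃_one_div_two_mul {s : ℝ} (hs : 0 < s) :
    theta₃ 1 (2 * s) / theta₃ 0 (2 * s) =
      theta₃ 1 s / theta₃ 0 s / 2 - theta₄ 0 s ^ 2 * (theta₃ 0 s ^ 2 - theta₄ 0 s ^ 2) / 8 := by
  have h₃ := (theta₃_pos hs).ne'
  have h₂ := (theta₃_pos (mul_pos two_pos hs)).ne'
  have h₄ : theta₄ 1 s =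
      theta₄ 0 s * (theta₃ 1 s / theta₃ 0 s - (theta₃ 0 s ^ 4 - theta₄ 0 s ^ 4) / 4) :=
    (div_eq_iff_mul_eq (theta₄_pos hs).ne').1 (theta₄_one_div hs) |>.symm.trans (mul_comm _ _)
  have hlog : theta₃ 1 (2 * s) / theta₃ 0 (2 * s) =
      (theta₃ 0 s * theta₃ 1 s + theta₄ 0 s * theta₄ 1 s) /
        (2 * (theta₃ 0 s ^ 2 + theta₄ 0 s ^ 2)) := by
    rw [theta₃_zero_mul_one_add_theta₄_zero_mul_one hs, theta₃_sq_add_theta₄_sq hs]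
    field_simp
    ring
  rw [hlog, h₄]
  field_simp
  ring

lemma theta₃_two_div_two_mul {s : ℝ} (hs : 0 < s) :
    theta₃ 2 (2 * s) / theta₃ 0 (2 * s) - (theta₃ 1 (2 * s) / theta₃ 0 (2 * s)) ^ 2 =
      (theta₃ 2 s / theta₃ 0 s - (theta₃ 1 s / theta₃ 0 s) ^ 2) / 4 -
        theta₄ 0 s ^ 2 * (theta₃ 0 s ^ 2 * (theta₃ 1 s / theta₃ 0 s) +
          (theta₃ 0 s ^ 2 - 2 * theta₄ 0 s ^ 2) * (theta₄ 1 s / theta₄ 0 s)) / 8 := by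
  have h₃ := (theta₃_pos hs).ne'
  have h₄ := (theta₄_pos hs).ne'
  have h₂ := (theta₃_pos (mul_pos two_pos hs)).ne'
  have h := eq_of_hasDerivAt_of_eqOn_pos hs (fun t ht => theta₃_one_div_two_mul ht)
    ((hasDerivAt_theta₃_two_mul 1 hs).fun_div (hasDerivAt_theta₃_two_mul 0 hs) h₂)
    ((((hasDerivAt_theta₃ 1 hs).fun_div (hasDerivAt_theta₃ 0 hs) h₃).div_const 2).fun_sub
      ((((hasDerivAt_theta₄ 0 hs).fun_pow 2).fun_mul
        (((hasDerivAt_theta₃ 0 hs).fun_pow 2).fun_sub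
          ((hasDerivAt_theta₄ 0 hs).fun_pow 2))).div_const 8))
  norm_num at h
  field_simp at h ⊢
  linear_combination -h

/-- The defect of `θ₃` in its second order differential equation; `theta₃_ode` says that it
vanishes. -/
noncomputable def thetaDefect (s : ℝ) : ℝ :=
  theta₃ 2 s / theta₃ 0 s - 3 * (theta₃ 1 s / theta₃ 0 s) ^ 2 -
    theta₄ 0 s ^ 4 * (theta₃ 0 s ^ 4 - theta₄ 0 s ^ 4) / 8

lemma four_mul_thetaDefect_two_mul {s : ℝ} (hs : 0 < s) :
    4 * thetaDefect (2 * s) = thetaDefect s := by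
  have hpow := theta₃_pow_four_sub_theta₄_pow_four_two_mul hs
  have hfour : theta₄ 0 (2 * s) ^ 4 = (theta₃ 0 s * theta₄ 0 s) ^ 2 := by
    rw [theta₃_mul_theta₄ hs]
    ring
  rw [thetaDefect, thetaDefect, sub_eq_iff_eq_add.1 (theta₃_two_div_two_mul hs),
    theta₃_one_div_two_mul hs, theta₄_one_div hs]
  linear_combination -(theta₄ 0 (2 * s) ^ 4 / 8) * hpow -
    (theta₃ 0 s ^ 2 - theta₄ 0 s ^ 2) ^ 2 / 8 * hfour

lemma tendsto_exp_mul_thetaDefect :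
    Tendsto (fun s => Real.exp (π * s) * thetaDefect s) atTop (𝓝 0) := by
  have h₁ := (tendsto_exp_mul_theta₃_succ 1).div tendsto_theta₃ one_ne_zero
  have h₂ := ((tendsto_exp_mul_theta₃_succ 0).mul
    (tendsto_zero_of_tendsto_exp_mul (tendsto_exp_mul_theta₃_succ 0))).div
    (tendsto_theta₃.pow 2) (by norm_num)
  have h₃ := (tendsto_theta₄.pow 4).mul tendsto_exp_mul_theta₃_pow_four_sub_theta₄_pow_four
  have h := (h₁.sub (h₂.const_mul 3)).sub (h₃.div_const 8)
  norm_num at h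
  refine h.congr fun s => ?_
  rw [thetaDefect]
  ring

lemma theta₃_ode {s : ℝ} (hs : 0 < s) :
    theta₃ 2 s / theta₃ 0 s - 3 * (theta₃ 1 s / theta₃ 0 s) ^ 2 =
      theta₄ 0 s ^ 4 * (theta₃ 0 s ^ 4 - theta₄ 0 s ^ 4) / 8 := by
  have hinv : s ^ 2 * thetaDefect s = 0 := by
    refine eq_of_doubling_invariant (f := fun s => s ^ 2 * thetaDefect s) (fun t ht => ?_)
      (tendsto_pow_mul_of_tendsto_exp_mul 2 tendsto_exp_mul_thetaDefect) hs
    linear_combination t ^ 2 * four_mul_thetaDefect_two_mul ht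
  exact sub_eq_zero.1 ((mul_eq_zero.1 hinv).resolve_left (pow_pos hs 2).ne')

/-- The second Rankin–Cohen bracket of `θ₃(s)` and `θ₃(2 * s)`, up to normalization; it is the theta
series `∑ Re ((m + i √2 n) ^ 4) * exp (-π s (m ^ 2 + 2 n ^ 2))`. -/
noncomputable def thetaBracket (s : ℝ) : ℝ :=
  theta₃ 2 s * theta₃ 0 (2 * s) - 12 * (theta₃ 1 s * theta₃ 1 (2 * s)) +
    4 * (theta₃ 0 s * theta₃ 2 (2 * s))

lemma thetaBracket_eq_mul {s : ℝ} (hs : 0 < s) :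
    thetaBracket s = theta₃ 0 (2 * s) * theta₃ 0 s * theta₄ 0 s ^ 2 *
      (theta₃ 0 s ^ 2 - theta₄ 0 s ^ 2) *
      (2 * theta₃ 0 s ^ 4 + 3 * (theta₃ 0 s ^ 2 * theta₄ 0 s ^ 2) - theta₄ 0 s ^ 4) / 16 := by
  have hs2 : 0 < 2 * s := mul_pos two_pos hs
  have h₃ := (theta₃_pos hs).ne'
  have h₂ := (theta₃_pos hs2).ne'
  have hpow := theta₃_pow_four_sub_theta₄_pow_four_two_mul hs
  have hfour : theta₄ 0 (2 * s) ^ 4 = (theta₃ 0 s * theta₄ 0 s) ^ 2 := by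
    rw [theta₃_mul_theta₄ hs]
    ring
  have hratio : thetaBracket s = theta₃ 0 s * theta₃ 0 (2 * s) *
      (theta₃ 2 s / theta₃ 0 s -
        12 * (theta₃ 1 s / theta₃ 0 s) * (theta₃ 1 (2 * s) / theta₃ 0 (2 * s)) +
        4 * (theta₃ 2 (2 * s) / theta₃ 0 (2 * s))) := by
    rw [thetaBracket]
    field_simp
  rw [hratio, sub_eq_iff_eq_add.1 (theta₃_ode hs), sub_eq_iff_eq_add.1 (theta₃_ode hs2),
    theta₃_one_div_two_mul hs]
  linear_combination theta₃ 0 s * theta₃ 0 (2 * s) * (theta₄ 0 (2 * s) ^ 4 / 8 * hpow +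
    (theta₃ 0 s ^ 2 - theta₄ 0 s ^ 2) ^ 2 / 8 * hfour)

/-! ### The complete elliptic integral and the arithmetic-geometric mean -/

/-- Gauss's integral `∫₀^∞ du / √((u ^ 2 + x ^ 2) (u ^ 2 + z ^ 2))`, which depends only on the
arithmetic-geometric mean of `x` and `z`. -/
noncomputable def agmIntegral (x z : ℝ) : ℝ :=
  ∫ u in Set.Ioi (0 : ℝ), 1 / √((u ^ 2 + x ^ 2) * (u ^ 2 + z ^ 2))

lemma image_sub_div_Ioi {c : ℝ} (hc : 0 < c) :
    (fun u : ℝ => u - c / u) '' Set.Ioi 0 = Set.univ := by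
  refine Set.eq_univ_of_forall fun v => ?_
  have hsq : √(v ^ 2 + 4 * c) ^ 2 = v ^ 2 + 4 * c := Real.sq_sqrt (by positivity)
  have habs : |v| < √(v ^ 2 + 4 * c) := Real.lt_sqrt_of_sq_lt (by rw [sq_abs]; linarith)
  have hroot : 0 < (v + √(v ^ 2 + 4 * c)) / 2 := by linarith [neg_abs_le v]
  refine ⟨(v + √(v ^ 2 + 4 * c)) / 2, hroot, ?_⟩
  have hne : v + √(v ^ 2 + 4 * c) ≠ 0 := by linarith
  field_simp
  linear_combination hsq

lemma injOn_sub_div_Ioi {c : ℝ} (hc : 0 ≤ c) :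
    Set.InjOn (fun u : ℝ => u - c / u) (Set.Ioi 0) := by
  intro u hu w hw huw
  have hu₀ : 0 < u := hu
  have hw₀ : 0 < w := hw
  have hfactor : (u - w) * (1 + c / (u * w)) = (u - c / u) - (w - c / w) := by
    field_simp
    ring
  rw [sub_eq_zero.2 huw] at hfactor
  exact sub_eq_zero.1 ((mul_eq_zero.1 hfactor).resolve_right (by positivity))

/-- The Cauchy–Schlömilch substitution. -/
lemma integral_eq_integral_Ioi_sub_div (F : ℝ → ℝ) {c : ℝ} (hc : 0 < c) :
    ∫ v, F v = ∫ u in Set.Ioi (0 : ℝ), (1 + c / u ^ 2) * F (u - c / u) := by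
  have hderiv (u : ℝ) (hu : u ∈ Set.Ioi 0) :
      HasDerivWithinAt (fun u : ℝ => u - c / u) (1 + c / u ^ 2) (Set.Ioi 0) u := by
    have hu₀ : u ≠ 0 := (Set.mem_Ioi.1 hu).ne'
    refine (((hasDerivAt_id u).sub ((hasDerivAt_inv hu₀).const_mul c)).congr_deriv
      ?_).hasDerivWithinAt
    field_simp
    ring
  rw [← setIntegral_univ, ← image_sub_div_Ioi hc,
    integral_image_eq_integral_abs_deriv_smul measurableSet_Ioi hderiv (injOn_sub_div_Ioi hc.le)]
  refine setIntegral_congr_fun measurableSet_Ioi fun u _ => ?_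
  rw [smul_eq_mul, abs_of_pos (by positivity)]

lemma two_mul_agmIntegral (x z : ℝ) :
    2 * agmIntegral x z = ∫ v, 1 / √((v ^ 2 + x ^ 2) * (v ^ 2 + z ^ 2)) := by
  rw [agmIntegral,
    ← integral_comp_abs (f := fun u : ℝ => 1 / √((u ^ 2 + x ^ 2) * (u ^ 2 + z ^ 2)))]
  simp only [sq_abs]

/-- Gauss's invariance under one step of the arithmetic-geometric mean; the substitution is
`v = (u - x z / u) / 2`. -/
lemma agmIntegral_mean {x z w : ℝ} (hx : 0 < x) (hz : 0 < z) (hw : w ^ 2 = x * z) :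
    agmIntegral ((x + z) / 2) w = agmIntegral x z := by
  set F : ℝ → ℝ := fun v => 1 / √((v ^ 2 + ((x + z) / 2) ^ 2) * (v ^ 2 + w ^ 2)) with hF
  have hpoint (u : ℝ) (hu : u ∈ Set.Ioi 0) : (1 + x * z / u ^ 2) * F ((u - x * z / u) / 2) =
      4 * (1 / √((u ^ 2 + x ^ 2) * (u ^ 2 + z ^ 2))) := by
    have hu₀ : 0 < u := hu
    have hsquare : (((u - x * z / u) / 2) ^ 2 + ((x + z) / 2) ^ 2) *
        (((u - x * z / u) / 2) ^ 2 + w ^ 2) =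
        ((u ^ 2 + x * z) / (4 * u ^ 2)) ^ 2 * ((u ^ 2 + x ^ 2) * (u ^ 2 + z ^ 2)) := by
      rw [hw]
      field_simp
      ring
    simp only [hF]
    rw [hsquare, Real.sqrt_mul (sq_nonneg _), Real.sqrt_sq (by positivity)]
    field_simp
  have hscale : ∫ v, F (v / 2) = 4 * agmIntegral ((x + z) / 2) w := by
    rw [Measure.integral_comp_div, ← two_mul_agmIntegral, abs_two, smul_eq_mul]
    ring
  have hsubst : ∫ v, F (v / 2) = 4 * agmIntegral x z := by
    rw [integral_eq_integral_Ioi_sub_div _ (mul_pos hx hz),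
      setIntegral_congr_fun measurableSet_Ioi hpoint, integral_const_mul, agmIntegral]
  exact mul_left_cancel₀ four_ne_zero (hscale.symm.trans hsubst)

lemma agmIntegral_mul_mul {t : ℝ} (ht : 0 < t) (x z : ℝ) :
    agmIntegral (t * x) (t * z) = t⁻¹ * agmIntegral x z := by
  have hpoint (u : ℝ) : 1 / √(((t * u) ^ 2 + (t * x) ^ 2) * ((t * u) ^ 2 + (t * z) ^ 2)) =
      (t ^ 2)⁻¹ * (1 / √((u ^ 2 + x ^ 2) * (u ^ 2 + z ^ 2))) := by
    rw [show ((t * u) ^ 2 + (t * x) ^ 2) * ((t * u) ^ 2 + (t * z) ^ 2) =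
      (t ^ 2) ^ 2 * ((u ^ 2 + x ^ 2) * (u ^ 2 + z ^ 2)) by ring, Real.sqrt_mul (sq_nonneg _),
      Real.sqrt_sq (sq_nonneg t), ← one_div_mul_one_div, one_div (t ^ 2)]
  have hsubst : (t ^ 2)⁻¹ * agmIntegral x z = t⁻¹ * agmIntegral (t * x) (t * z) := by
    have h := integral_comp_mul_left_Ioi
      (fun u : ℝ => 1 / √((u ^ 2 + (t * x) ^ 2) * (u ^ 2 + (t * z) ^ 2))) 0 ht
    simpa only [agmIntegral, hpoint, mul_zero, integral_const_mul, smul_eq_mul] using h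
  field_simp at hsubst ⊢
  exact hsubst.symm

lemma agmIntegral_self {x : ℝ} (hx : 0 < x) : agmIntegral x x = π / 2 / x := by
  have hone : agmIntegral 1 1 = π / 2 := by
    have harctan := integral_Ioi_inv_one_add_sq (i := 0)
    rw [Real.arctan_zero, sub_zero] at harctan
    rw [agmIntegral, ← harctan]
    refine setIntegral_congr_fun measurableSet_Ioi fun u _ => ?_
    rw [Real.sqrt_mul_self (by positivity), one_div, one_pow, add_comm]
  rw [div_eq_inv_mul _ x, ← hone, ← agmIntegral_mul_mul hx, mul_one]

lemma integrable_inv_sq_add_sq {x : ℝ} (hx : x ≠ 0) :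
    Integrable fun u : ℝ => (u ^ 2 + x ^ 2)⁻¹ := by
  refine ((integrable_inv_one_add_sq.comp_div hx).const_mul (x ^ 2)⁻¹).congr
    (ae_of_all _ fun u => ?_)
  simp only
  rw [← mul_inv, mul_add, div_pow, mul_div_cancel₀ _ (pow_ne_zero 2 hx), mul_one, add_comm]

lemma integrable_one_div_sqrt_mul {x z : ℝ} (hx : x ≠ 0) (hz : z ≠ 0) :
    Integrable fun u : ℝ => 1 / √((u ^ 2 + x ^ 2) * (u ^ 2 + z ^ 2)) := by
  refine (((integrable_inv_sq_add_sq hx).add (integrable_inv_sq_add_sq hz)).div_const 2).mono'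
    (by measurability) (ae_of_all _ fun u => ?_)
  rw [Real.norm_of_nonneg (by positivity), one_div, ← Real.sqrt_inv, mul_inv, Pi.add_apply]
  exact Real.sqrt_le_iff.2 ⟨by positivity,
    by nlinarith [sq_nonneg ((u ^ 2 + x ^ 2)⁻¹ - (u ^ 2 + z ^ 2)⁻¹)]⟩

lemma agmIntegral_anti {x z x' z' : ℝ} (hx : 0 < x) (hz : 0 < z) (hx' : x ≤ x') (hz' : z ≤ z') :
    agmIntegral x' z' ≤ agmIntegral x z := by
  refine setIntegral_mono_on
    (integrable_one_div_sqrt_mul (hx.trans_le hx').ne' (hz.trans_le hz').ne').integrableOn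
    (integrable_one_div_sqrt_mul hx.ne' hz.ne').integrableOn measurableSet_Ioi fun u _ => ?_
  gcongr

lemma tendsto_agmIntegral {f g : ℝ → ℝ} {l : Filter ℝ} {x : ℝ} (hx : 0 < x)
    (hf : Tendsto f l (𝓝 x)) (hg : Tendsto g l (𝓝 x)) :
    Tendsto (fun s => agmIntegral (f s) (g s)) l (𝓝 (agmIntegral x x)) := by
  have hmax : Tendsto (fun s => π / 2 / max (f s) (g s)) l (𝓝 (π / 2 / x)) := by
    simpa [Pi.div_def] using (tendsto_const_nhds (x := π / 2)).div (hf.max hg)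
      (by simpa using hx.ne')
  have hmin : Tendsto (fun s => π / 2 / min (f s) (g s)) l (𝓝 (π / 2 / x)) := by
    simpa [Pi.div_def] using (tendsto_const_nhds (x := π / 2)).div (hf.min hg)
      (by simpa using hx.ne')
  rw [agmIntegral_self hx]
  refine tendsto_of_tendsto_of_tendsto_of_le_of_le' hmax hmin ?_ ?_
  · filter_upwards [hf.eventually_const_lt hx, hg.eventually_const_lt hx] with s hfs hgs
    rw [← agmIntegral_self (lt_max_of_lt_left hfs)]
    exact agmIntegral_anti hfs hgs (le_max_left _ _) (le_max_right _ _)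
  · filter_upwards [hf.eventually_const_lt hx, hg.eventually_const_lt hx] with s hfs hgs
    have hpos : 0 < min (f s) (g s) := lt_min hfs hgs
    rw [← agmIntegral_self hpos]
    exact agmIntegral_anti hpos hpos (min_le_left _ _) (min_le_right _ _)

lemma agmIntegral_theta₃_sq_theta₄_sq {s : ℝ} (hs : 0 < s) :
    agmIntegral (theta₃ 0 s ^ 2) (theta₄ 0 s ^ 2) = π / 2 := by
  have hone : agmIntegral 1 1 = π / 2 := by rw [agmIntegral_self one_pos, div_one]
  rw [← hone]
  refine eq_of_doubling_invariant
    (f := fun s => agmIntegral (theta₃ 0 s ^ 2) (theta₄ 0 s ^ 2)) (fun t ht => ?_)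
    (tendsto_agmIntegral one_pos (by simpa using tendsto_theta₃.pow 2)
      (by simpa using tendsto_theta₄.pow 2)) hs
  rw [show theta₃ 0 (2 * t) ^ 2 = (theta₃ 0 t ^ 2 + theta₄ 0 t ^ 2) / 2 by
    linarith [theta₃_sq_add_theta₄_sq ht]]
  refine agmIntegral_mean (pow_pos (theta₃_pos ht) 2) (pow_pos (theta₄_pos ht) 2) ?_
  rw [← theta₃_mul_theta₄ ht]
  ring

lemma image_inv_sqrt_one_add_sq :
    (fun u : ℝ => (√(1 + u ^ 2))⁻¹) '' Set.Ioi 0 = Set.Ioo 0 1 := by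
  ext x
  constructor
  · rintro ⟨u, hu, rfl⟩
    have hu₀ : 0 < u := hu
    have hone : 1 < √(1 + u ^ 2) := Real.lt_sqrt_of_sq_lt (by nlinarith)
    exact ⟨by positivity, inv_lt_one_of_one_lt₀ hone⟩
  · rintro ⟨hx₀, hx₁⟩
    have hsq : 0 < x⁻¹ ^ 2 - 1 := sub_pos.2 (one_lt_pow₀ ((one_lt_inv₀ hx₀).2 hx₁) two_ne_zero)
    refine ⟨√(x⁻¹ ^ 2 - 1), Real.sqrt_pos.2 hsq, ?_⟩
    simp only
    rw [Real.sq_sqrt hsq.le, add_sub_cancel, Real.sqrt_sq (by positivity), inv_inv]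

lemma hasDerivAt_inv_sqrt_one_add_sq (u : ℝ) :
    HasDerivAt (fun u : ℝ => (√(1 + u ^ 2))⁻¹) (-(u / √(1 + u ^ 2)) / √(1 + u ^ 2) ^ 2) u := by
  have hpos : 0 < 1 + u ^ 2 := by positivity
  refine ((((hasDerivAt_pow 2 u).const_add 1).sqrt hpos.ne').inv
    (Real.sqrt_pos.2 hpos).ne').congr_deriv ?_
  norm_num
  ring

lemma injOn_inv_sqrt_one_add_sq :
    Set.InjOn (fun u : ℝ => (√(1 + u ^ 2))⁻¹) (Set.Ioi 0) := by
  intro u hu w hw huw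
  have hsq : 1 + u ^ 2 = 1 + w ^ 2 :=
    (Real.sqrt_inj (by positivity) (by positivity)).1 (inv_injective huw)
  exact (pow_left_inj₀ (le_of_lt hu) (le_of_lt hw) two_ne_zero).1 (add_left_cancel hsq)

lemma EllK_eq_agmIntegral {k k' : ℝ} (hk : k ^ 2 + k' ^ 2 = 1) : EllK k = agmIntegral 1 k' := by
  rw [EllK, intervalIntegral.integral_of_le zero_le_one, integral_Ioc_eq_integral_Ioo,
    ← image_inv_sqrt_one_add_sq, integral_image_eq_integral_abs_deriv_smul measurableSet_Ioi
      (fun u _ => (hasDerivAt_inv_sqrt_one_add_sq u).hasDerivWithinAt) injOn_inv_sqrt_one_add_sq]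
  refine setIntegral_congr_fun measurableSet_Ioi fun u hu => ?_
  have hu₀ : 0 < u := hu
  have hpos : 0 < 1 + u ^ 2 := by positivity
  have hsq : √(1 + u ^ 2) ^ 2 = 1 + u ^ 2 := Real.sq_sqrt hpos.le
  have hradicand : (1 - (√(1 + u ^ 2))⁻¹ ^ 2) * (1 - k ^ 2 * (√(1 + u ^ 2))⁻¹ ^ 2) =
      (u / (1 + u ^ 2)) ^ 2 * (u ^ 2 + k' ^ 2) := by
    rw [inv_pow, hsq, show k' ^ 2 = 1 - k ^ 2 by linarith]
    field_simp
    ring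
  simp only [smul_eq_mul]
  rw [hradicand, Real.sqrt_mul (sq_nonneg _), Real.sqrt_sq (by positivity), hsq, neg_div, abs_neg,
    abs_of_pos (by positivity), one_pow, add_comm (u ^ 2) 1, Real.sqrt_mul hpos.le]
  field_simp

/-- The modulus whose complete elliptic integral is `π / 2 * θ₃(2 s) ^ 2`, written in terms of
`θ₃(s)` and `θ₄(s)` (Landen's transformation). -/
noncomputable def thetaModulus (s : ℝ) : ℝ :=
  (theta₃ 0 s ^ 2 - theta₄ 0 s ^ 2) / (theta₃ 0 s ^ 2 + theta₄ 0 s ^ 2)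

lemma hasDerivAt_thetaModulus {s : ℝ} (hs : 0 < s) :
    HasDerivAt thetaModulus (-(π * (theta₃ 0 s ^ 2 * theta₄ 0 s ^ 2 *
      (theta₃ 0 s ^ 4 - theta₄ 0 s ^ 4) / (theta₃ 0 s ^ 2 + theta₄ 0 s ^ 2) ^ 2))) s := by
  have h₃ := (hasDerivAt_theta₃ 0 hs).fun_pow 2
  have h₄ := (hasDerivAt_theta₄ 0 hs).fun_pow 2
  have hpos : 0 < theta₃ 0 s ^ 2 + theta₄ 0 s ^ 2 := by
    have := theta₃_pos hs
    positivity
  have hwronskian := four_mul_thetaWronskian hs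
  rw [thetaWronskian] at hwronskian
  refine ((h₃.fun_sub h₄).fun_div (h₃.fun_add h₄) hpos.ne').congr_deriv ?_
  norm_num
  field_simp
  linear_combination -(theta₃ 0 s * theta₄ 0 s) * hwronskian

lemma thetaModulus_mem_Ioo {s : ℝ} (hs : 0 < s) : thetaModulus s ∈ Set.Ioo (0 : ℝ) 1 := by
  have h₄ : 0 < theta₄ 0 s ^ 2 := pow_pos (theta₄_pos hs) 2
  have hlt := theta₄_sq_lt_theta₃_sq hs
  refine ⟨div_pos (by linarith) (by linarith), ?_⟩
  rw [thetaModulus, div_lt_one (by linarith)]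
  linarith

lemma strictAntiOn_thetaModulus : StrictAntiOn thetaModulus (Set.Ioi 0) := by
  refine strictAntiOn_of_deriv_neg (convex_Ioi 0)
    (fun s hs => (hasDerivAt_thetaModulus hs).continuousAt.continuousWithinAt) fun s hs => ?_
  rw [interior_Ioi] at hs
  have h₃ := theta₃_pos hs
  have h₄ := theta₄_pos hs
  have hsub := sub_pos.2 (theta₄_pow_four_lt_theta₃_pow_four hs)
  rw [(hasDerivAt_thetaModulus hs).deriv]
  exact neg_neg_of_pos (by positivity)

lemma tendsto_thetaModulus_atTop : Tendsto thetaModulus atTop (𝓝 0) := by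
  have h := ((tendsto_theta₃.pow 2).sub (tendsto_theta₄.pow 2)).div
    ((tendsto_theta₃.pow 2).add (tendsto_theta₄.pow 2)) (by norm_num)
  norm_num at h
  exact h

lemma one_add_thetaModulus {s : ℝ} (hs : 0 < s) :
    1 + thetaModulus s = (theta₃ 0 s / theta₃ 0 (2 * s)) ^ 2 := by
  have h₃ := theta₃_pos hs
  have hsq : theta₃ 0 (2 * s) ^ 2 = (theta₃ 0 s ^ 2 + theta₄ 0 s ^ 2) / 2 := by
    linarith [theta₃_sq_add_theta₄_sq hs]
  rw [div_pow, hsq, thetaModulus]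
  field_simp
  ring

lemma thetaModulus_inv {s : ℝ} (hs : 0 < s) :
    thetaModulus s⁻¹ = 2 * (theta₃ 0 s / theta₃ 0 (2⁻¹ * s)) ^ 2 - 1 := by
  have hhalf : 0 < 2⁻¹ * s := by positivity
  rw [eq_sub_of_add_eq' (one_add_thetaModulus (inv_pos.2 hs)), theta₃_inv hs,
    show 2 * s⁻¹ = (2⁻¹ * s)⁻¹ by rw [mul_inv, inv_inv], theta₃_inv hhalf,
    Real.sqrt_mul (by norm_num), Real.sqrt_inv]
  field_simp
  rw [Real.sq_sqrt zero_le_two]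

lemma tendsto_thetaModulus_zero : Tendsto thetaModulus (𝓝[>] 0) (𝓝 1) := by
  have hhalf : Tendsto (fun s : ℝ => 2⁻¹ * s) atTop atTop :=
    tendsto_id.const_mul_atTop (by norm_num)
  have h := (((tendsto_theta₃.div (tendsto_theta₃.comp hhalf) one_ne_zero).pow 2).const_mul
    2).sub_const 1
  norm_num at h
  refine (h.comp (tendsto_inv_nhdsGT_zero (𝕜 := ℝ))).congr' ?_
  filter_upwards [self_mem_nhdsWithin] with s hs
  rw [← inv_inv s, thetaModulus_inv (inv_pos.2 hs), inv_inv]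
  norm_num

lemma image_thetaModulus : thetaModulus '' Set.Ioi 0 = Set.Ioo 0 1 := by
  refine Set.Subset.antisymm ?_ fun y hy => ?_
  · rintro _ ⟨s, hs, rfl⟩
    exact thetaModulus_mem_Ioo hs
  · obtain ⟨s, hsy, hs⟩ := ((tendsto_thetaModulus_atTop.eventually_lt_const hy.1).and
      (eventually_gt_atTop 0)).exists
    obtain ⟨t, hty, ht⟩ := ((tendsto_thetaModulus_zero.eventually_const_lt hy.2).and
      self_mem_nhdsWithin).exists
    exact isPreconnected_Ioi.intermediate_value hs ht
      (fun s hs => (hasDerivAt_thetaModulus hs).continuousAt.continuousWithinAt)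
      ⟨hsy.le, hty.le⟩

lemma EllK_thetaModulus {s : ℝ} (hs : 0 < s) :
    EllK (thetaModulus s) = theta₃ 0 (2 * s) ^ 2 * (π / 2) := by
  have hs2 : 0 < 2 * s := mul_pos two_pos hs
  have h₂ : 0 < theta₃ 0 (2 * s) ^ 2 := pow_pos (theta₃_pos hs2) 2
  have hsq : theta₃ 0 (2 * s) ^ 2 = (theta₃ 0 s ^ 2 + theta₄ 0 s ^ 2) / 2 := by
    linarith [theta₃_sq_add_theta₄_sq hs]
  have hpythagoras :
      thetaModulus s ^ 2 + (theta₄ 0 (2 * s) ^ 2 / theta₃ 0 (2 * s) ^ 2) ^ 2 = 1 := by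
    rw [hsq] at h₂ ⊢
    have hpos : 0 < theta₃ 0 s ^ 2 + theta₄ 0 s ^ 2 := by linarith
    rw [← theta₃_mul_theta₄ hs, thetaModulus]
    field_simp
    ring
  have hscale := agmIntegral_mul_mul h₂ 1 (theta₄ 0 (2 * s) ^ 2 / theta₃ 0 (2 * s) ^ 2)
  rw [mul_one, mul_div_cancel₀ _ h₂.ne', agmIntegral_theta₃_sq_theta₄_sq hs2] at hscale
  rw [EllK_eq_agmIntegral hpythagoras, hscale, mul_inv_cancel_left₀ h₂.ne']

lemma integral_EllK_eq_integral_thetaBracket :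
    ∫ k in (0 : ℝ)..1, (2 + 3 * k - k ^ 2) / √(1 + k) * EllK k ^ 3 =
      π ^ 4 / 2 * ∫ s in Set.Ioi (0 : ℝ), thetaBracket s := by
  rw [intervalIntegral.integral_of_le zero_le_one, integral_Ioc_eq_integral_Ioo,
    ← image_thetaModulus, integral_image_eq_integral_abs_deriv_smul measurableSet_Ioi
      (fun s hs => (hasDerivAt_thetaModulus hs).hasDerivWithinAt)
      strictAntiOn_thetaModulus.injOn, ← integral_const_mul]
  refine setIntegral_congr_fun measurableSet_Ioi fun s hs => ?_
  have h₃ := theta₃_pos hs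
  have h₄ := theta₄_pos hs
  have h₂ := theta₃_pos (mul_pos two_pos hs)
  have hsub := sub_pos.2 (theta₄_pow_four_lt_theta₃_pow_four hs)
  have hsq : theta₃ 0 (2 * s) ^ 2 = (theta₃ 0 s ^ 2 + theta₄ 0 s ^ 2) / 2 := by
    linarith [theta₃_sq_add_theta₄_sq hs]
  simp only [smul_eq_mul]
  rw [abs_neg, abs_of_pos (by positivity), EllK_thetaModulus hs, one_add_thetaModulus hs,
    Real.sqrt_sq (by positivity), thetaModulus, thetaBracket_eq_mul hs, hsq]
  field_simp
  ring

/-! ### The Fricke involution -/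

lemma hasDerivAt_theta₃_inv (j : ℕ) {s : ℝ} (hs : 0 < s) :
    HasDerivAt (fun t => theta₃ j t⁻¹) (π * theta₃ (j + 1) s⁻¹ / s ^ 2) s :=
  ((hasDerivAt_theta₃ j (inv_pos.2 hs)).comp s (hasDerivAt_inv hs.ne')).congr_deriv (by ring)

lemma theta₃_one_inv {s : ℝ} (hs : 0 < s) :
    theta₃ 1 s⁻¹ = √s * (s * theta₃ 0 s / (2 * π) - s ^ 2 * theta₃ 1 s) := by
  have hderiv := eq_of_hasDerivAt_of_eqOn_pos hs (fun t ht => theta₃_inv ht)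
    (hasDerivAt_theta₃_inv 0 hs)
    ((Real.hasDerivAt_sqrt hs.ne').fun_mul (hasDerivAt_theta₃ 0 hs))
  have hsqrt := Real.sqrt_pos.2 hs
  have hsq := Real.sq_sqrt hs.le
  norm_num at hderiv
  generalize √s = r at *
  subst hsq
  field_simp at hderiv ⊢
  linear_combination hderiv

lemma theta₃_two_inv {s : ℝ} (hs : 0 < s) :
    theta₃ 2 s⁻¹ = √s * (3 * s ^ 2 * theta₃ 0 s / (4 * π ^ 2) -
      3 * s ^ 3 * theta₃ 1 s / π + s ^ 4 * theta₃ 2 s) := by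
  have hderiv := eq_of_hasDerivAt_of_eqOn_pos hs (fun t ht => theta₃_one_inv ht)
    (hasDerivAt_theta₃_inv 1 hs)
    ((Real.hasDerivAt_sqrt hs.ne').fun_mul
      ((((hasDerivAt_id s).fun_mul (hasDerivAt_theta₃ 0 hs)).div_const (2 * π)).fun_sub
        ((hasDerivAt_pow 2 s).fun_mul (hasDerivAt_theta₃ 1 hs))))
  have hsqrt := Real.sqrt_pos.2 hs
  have hsq := Real.sq_sqrt hs.le
  norm_num at hderiv
  generalize √s = r at *
  subst hsq
  field_simp at hderiv ⊢
  linear_combination hderiv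

lemma thetaBracket_inv_two_mul {u : ℝ} (hu : 0 < u) :
    thetaBracket (2 * u)⁻¹ = 4 * √2 * u ^ 5 * thetaBracket u := by
  have hu2 : 0 < 2 * u := mul_pos two_pos hu
  have hsqrt := Real.sqrt_pos.2 hu
  have hsq := Real.sq_sqrt hu.le
  rw [thetaBracket, show 2 * (2 * u)⁻¹ = u⁻¹ by field_simp, theta₃_inv hu, theta₃_one_inv hu,
    theta₃_two_inv hu, theta₃_inv hu2, theta₃_one_inv hu2, theta₃_two_inv hu2, thetaBracket,
    Real.sqrt_mul zero_le_two]
  generalize √u = r at *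
  subst hsq
  field_simp
  ring

lemma integral_Ioi_eq_inv_mul_integral_comp_inv (f : ℝ → ℝ) {c : ℝ} (hc : 0 < c) :
    ∫ s in Set.Ioi (0 : ℝ), f s =
      c⁻¹ * ∫ u in Set.Ioi (0 : ℝ), (u ^ 2)⁻¹ * f (c * u)⁻¹ := by
  have hmul := integral_comp_mul_left_Ioi f 0 (inv_pos.2 hc)
  have hinv := integral_comp_rpow_Ioi (fun s => f (c⁻¹ * s)) (p := -1) (by norm_num)
  rw [inv_inv, mul_zero, smul_eq_mul] at hmul
  rw [eq_inv_mul_iff_mul_eq₀ hc.ne', ← hmul, ← hinv]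
  refine setIntegral_congr_fun measurableSet_Ioi fun u hu => ?_
  have hpow : u ^ (-1 - 1 : ℝ) = (u ^ 2)⁻¹ := by
    rw [show (-1 - 1 : ℝ) = -(2 : ℕ) by norm_num, Real.rpow_neg (le_of_lt hu), Real.rpow_natCast]
  simp only [hpow, Real.rpow_neg_one, abs_neg, abs_one, one_mul, smul_eq_mul, mul_inv]

lemma integral_thetaBracket :
    ∫ s in Set.Ioi (0 : ℝ), thetaBracket s =
      2 * √2 * ∫ u in Set.Ioi (0 : ℝ), u ^ 3 * thetaBracket u := by
  rw [integral_Ioi_eq_inv_mul_integral_comp_inv thetaBracket two_pos, ← integral_const_mul,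
    ← integral_const_mul]
  refine setIntegral_congr_fun measurableSet_Ioi fun u hu => ?_
  have hu₀ : 0 < u := hu
  rw [thetaBracket_inv_two_mul hu₀]
  field_simp
  ring

/-! ### Mellin transforms and Eisenstein series -/

/-- The theta series of the lattice `ℤ τ + ℤ` weighted by the harmonic polynomial `Re (z ^ k)`. -/
noncomputable def harmonicTheta (k : ℕ) (τ : UpperHalfPlane) (s : ℝ) : ℝ :=
  ∑' v : Fin 2 → ℤ, (((v 0 : ℂ) * τ + v 1) ^ k).re *
    Real.exp (-π * ‖(v 0 : ℂ) * τ + v 1‖ ^ 2 * s)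

lemma integrableOn_pow_mul_exp_neg_mul (n : ℕ) {r : ℝ} (hr : 0 < r) :
    IntegrableOn (fun u : ℝ => u ^ n * Real.exp (-(r * u))) (Set.Ioi 0) := by
  refine (integrableOn_rpow_mul_exp_neg_mul_rpow (p := 1) (s := n)
    (neg_one_lt_zero.trans_le n.cast_nonneg) one_pos hr).congr_fun (fun u _ => ?_) measurableSet_Ioi
  simp only [Real.rpow_natCast, Real.rpow_one, neg_mul]

lemma integral_pow_mul_exp_neg_mul (n : ℕ) {r : ℝ} (hr : 0 < r) :
    ∫ u in Set.Ioi (0 : ℝ), u ^ n * Real.exp (-(r * u)) = n.factorial / r ^ (n + 1) := by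
  have h := Real.integral_rpow_mul_exp_neg_mul_Ioi (a := n + 1) (by positivity) hr
  rw [Real.Gamma_nat_eq_factorial, add_sub_cancel_right, one_div] at h
  simp only [Real.rpow_natCast] at h
  rw [h, ← Nat.cast_succ, Real.rpow_natCast, inv_pow, inv_mul_eq_div]

section Mellin

variable {c r : ℝ}

lemma integrableOn_pow_mul_mul_exp_neg_mul (hr : 0 ≤ r) (hc : r = 0 → c = 0) (n : ℕ) :
    IntegrableOn (fun u : ℝ => u ^ n * (c * Real.exp (-π * r * u))) (Set.Ioi 0) := by
  rcases hr.eq_or_lt with rfl | hr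
  · simp [hc rfl]
  · refine ((integrableOn_pow_mul_exp_neg_mul n (mul_pos Real.pi_pos hr)).const_mul c).congr
      (ae_of_all _ fun u => ?_)
    simp only [neg_mul, mul_left_comm]

lemma integral_pow_mul_mul_exp_neg_mul (hr : 0 ≤ r) (hc : r = 0 → c = 0) (n : ℕ) :
    ∫ u in Set.Ioi (0 : ℝ), u ^ n * (c * Real.exp (-π * r * u)) =
      n.factorial / π ^ (n + 1) * (c / r ^ (n + 1)) := by
  rcases hr.eq_or_lt with rfl | hr
  · simp [hc rfl]
  · rw [div_mul_div_comm, ← mul_pow, mul_comm _ c, mul_div_assoc,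
      ← integral_pow_mul_exp_neg_mul n (mul_pos Real.pi_pos hr), ← integral_const_mul]
    simp only [neg_mul, mul_left_comm]

end Mellin

lemma re_pow_div_norm_sq_pow (z : ℂ) (k : ℕ) : (z ^ k).re / (‖z‖ ^ 2) ^ k = (z ^ (-k : ℤ)).re := by
  rw [zpow_neg, zpow_natCast, Complex.inv_re, Complex.normSq_eq_norm_sq, norm_pow, pow_right_comm]

/-- Termwise, `∫ u ^ (k - 1) * exp (-π |z| ^ 2 u)` turns `z ^ k` into the conjugate of
`z ^ (-k)`, whose real part is that of `z ^ (-k)`. -/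
lemma integral_pow_mul_harmonicTheta {k : ℕ} (hk : 3 ≤ k) (τ : UpperHalfPlane) :
    ∫ u in Set.Ioi (0 : ℝ), u ^ (k - 1) * harmonicTheta k τ u =
      (k - 1).factorial / π ^ k * (∑' v, EisensteinSeries.eisSummand k v τ).re := by
  obtain ⟨n, rfl⟩ : ∃ n, k = n + 1 := ⟨k - 1, by lia⟩
  rw [Nat.add_sub_cancel]
  set z : (Fin 2 → ℤ) → ℂ := fun v => (v 0 : ℂ) * τ + v 1 with hz
  have hzero (v : Fin 2 → ℤ) (hv : ‖z v‖ ^ 2 = 0) : (z v ^ (n + 1)).re = 0 := by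
    rw [norm_eq_zero.1 (pow_eq_zero_iff two_ne_zero |>.1 hv), zero_pow n.succ_ne_zero,
      Complex.zero_re]
  have hsummable := EisensteinSeries.summable_norm_eisSummand (k := (n + 1 : ℕ))
    (by exact_mod_cast hk) τ
  have hnorm (v : Fin 2 → ℤ) :
      ∫ u in Set.Ioi (0 : ℝ), ‖u ^ n * ((z v ^ (n + 1)).re * Real.exp (-π * ‖z v‖ ^ 2 * u))‖ =
        n.factorial / π ^ (n + 1) * |(EisensteinSeries.eisSummand (n + 1 : ℕ) v τ).re| := by
    rw [EisensteinSeries.eisSummand, ← re_pow_div_norm_sq_pow, abs_div,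
      abs_of_nonneg (by positivity : 0 ≤ (‖(v 0 : ℂ) * τ + v 1‖ ^ 2) ^ (n + 1)),
      ← integral_pow_mul_mul_exp_neg_mul (sq_nonneg _) fun hv => abs_eq_zero.2 (hzero v hv)]
    refine setIntegral_congr_fun measurableSet_Ioi fun u hu => ?_
    simp only [hz, norm_mul, Real.norm_eq_abs, Real.abs_exp, abs_pow, abs_of_pos (Set.mem_Ioi.1 hu)]
  have hintegral := (hasSum_integral_of_summable_integral_norm
    (fun v => integrableOn_pow_mul_mul_exp_neg_mul (sq_nonneg ‖z v‖) (hzero v) n)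
    (by
      simp only [hnorm]
      exact (hsummable.of_nonneg_of_le (fun v => abs_nonneg _)
        fun v => Complex.abs_re_le_norm _).mul_left _)).tsum_eq
  simp only [harmonicTheta, ← tsum_mul_left]
  rw [← hintegral, Complex.re_tsum hsummable.of_norm, ← tsum_mul_left]
  refine tsum_congr fun v => ?_
  rw [integral_pow_mul_mul_exp_neg_mul (sq_nonneg _) (hzero v), re_pow_div_norm_sq_pow,
    EisensteinSeries.eisSummand]

/-- The point `i √2` of the upper half plane. -/
noncomputable def iSqrtTwo : UpperHalfPlane := ⟨Complex.I * (√2 : ℝ), by simp⟩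

lemma norm_sq_mul_iSqrtTwo_add (m n : ℤ) :
    ‖(n : ℂ) * iSqrtTwo + m‖ ^ 2 = (m : ℝ) ^ 2 + 2 * (n : ℝ) ^ 2 := by
  have hsqrt : √2 * √2 = (2 : ℝ) := Real.mul_self_sqrt zero_le_two
  rw [← Complex.normSq_eq_norm_sq, Complex.normSq_apply]
  simp only [iSqrtTwo, Complex.add_re, Complex.mul_re, Complex.intCast_re, Complex.I_re,
    Complex.ofReal_re, zero_mul, Complex.I_im, Complex.ofReal_im, mul_zero, sub_self,
    Complex.intCast_im, Complex.mul_im, one_mul, zero_add, Complex.add_im, add_zero]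
  linear_combination (n : ℝ) ^ 2 * hsqrt

lemma re_mul_iSqrtTwo_add_pow_four (m n : ℤ) :
    (((n : ℂ) * iSqrtTwo + m) ^ 4).re =
      (m : ℝ) ^ 4 - 12 * ((m : ℝ) ^ 2 * (n : ℝ) ^ 2) + 4 * (n : ℝ) ^ 4 := by
  have hsqrt : √2 * √2 = (2 : ℝ) := Real.mul_self_sqrt zero_le_two
  simp only [iSqrtTwo, pow_succ, pow_zero, one_mul, Complex.mul_re, Complex.add_re,
    Complex.intCast_re, Complex.I_re, Complex.ofReal_re, zero_mul, Complex.I_im, Complex.ofReal_im,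
    mul_zero, sub_self, Complex.intCast_im, Complex.mul_im, zero_add, Complex.add_im, add_zero]
  linear_combination ((n : ℝ) ^ 4 * (√2 * √2 + 2) - 6 * (m : ℝ) ^ 2 * (n : ℝ) ^ 2) * hsqrt

lemma thetaBracket_eq_harmonicTheta {s : ℝ} (hs : 0 < s) :
    thetaBracket s = harmonicTheta 4 iSqrtTwo s := by
  have hs2 : 0 < 2 * s := mul_pos two_pos hs
  have hsum (i j : ℕ) :=
    (summable_thetaMoment_mul abs_one_le_one abs_one_le_one i j hs hs2)
  have hmul (i j : ℕ) : theta₃ i s * theta₃ j (2 * s) = _ :=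
    thetaMoment_mul_thetaMoment abs_one_le_one abs_one_le_one i j hs hs2
  rw [thetaBracket, hmul, hmul, hmul, ← tsum_mul_left, ← tsum_mul_left,
    ← (hsum 2 0).tsum_sub ((hsum 1 1).mul_left 12),
    ← ((hsum 2 0).sub ((hsum 1 1).mul_left 12)).tsum_add ((hsum 0 2).mul_left 4), harmonicTheta,
    ← ((finTwoArrowEquiv ℤ).trans (Equiv.prodComm ℤ ℤ)).symm.tsum_eq]
  refine tsum_congr fun p => ?_
  simp only [Equiv.symm_trans_apply, Equiv.prodComm_symm, Equiv.prodComm_apply, Prod.swap,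
    finTwoArrowEquiv_symm_apply, Matrix.cons_val_zero, Matrix.cons_val_one,
    norm_sq_mul_iSqrtTwo_add, re_mul_iSqrtTwo_add_pow_four]
  ring_nf

lemma jacobiTheta₂_add_one_right (z τ : ℂ) :
    jacobiTheta₂ z (τ + 1) = jacobiTheta₂ (z + 1 / 2) τ := by
  refine tsum_congr fun n => ?_
  obtain ⟨m, hm⟩ : ∃ m : ℤ, n ^ 2 - n = 2 * m := by
    obtain ⟨m, hm⟩ := Int.even_mul_pred_self n
    exact ⟨m, by linear_combination hm⟩
  have hcast : (n : ℂ) ^ 2 - n = 2 * m := by exact_mod_cast hm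
  rw [jacobiTheta₂_term, jacobiTheta₂_term, Complex.exp_eq_exp_iff_exists_int]
  exact ⟨m, by linear_combination (π * Complex.I : ℂ) * hcast⟩

/-- The eighth power of the theta constant `θ₂(τ) = exp (π i τ / 4) * jacobiTheta₂ (τ / 2) τ`; the
power avoids a choice of root of `exp (2 π i τ)`. -/
noncomputable def theta₂PowEight (τ : ℂ) : ℂ :=
  Complex.exp (2 * π * Complex.I * τ) * jacobiTheta₂ (τ / 2) τ ^ 8

lemma theta₂PowEight_add_one (τ : ℂ) : theta₂PowEight (τ + 1) = theta₂PowEight τ := by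
  rw [theta₂PowEight, theta₂PowEight, jacobiTheta₂_add_one_right,
    show (τ + 1) / 2 + 1 / 2 = τ / 2 + 1 by ring, jacobiTheta₂_add_left,
    show 2 * π * Complex.I * (τ + 1) = 2 * π * Complex.I * τ + 2 * π * Complex.I by ring,
    Complex.exp_periodic]

lemma one_div_cpow_half_pow_eight (τ : ℂ) :
    (1 / (-Complex.I * τ) ^ (1 / 2 : ℂ)) ^ 8 = (τ ^ 4)⁻¹ := by
  have hsq : ((-Complex.I * τ) ^ (1 / 2 : ℂ)) ^ 2 = -Complex.I * τ := by
    rw [one_div, Complex.cpow_ofNat_inv_pow]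
  rw [div_pow, one_pow, pow_mul _ 2 4, hsq, mul_pow, neg_pow, Complex.I_pow_four]
  norm_num

lemma jacobiTheta₂_zero_pow_eight (τ : ℂ) :
    jacobiTheta₂ 0 τ ^ 8 = (τ ^ 4)⁻¹ * jacobiTheta₂ 0 (-1 / τ) ^ 8 := by
  rw [jacobiTheta₂_functional_equation, mul_pow, mul_pow, one_div_cpow_half_pow_eight]
  simp

lemma jacobiTheta₂_half_pow_eight {τ : ℂ} (hτ : τ ≠ 0) :
    jacobiTheta₂ (1 / 2) τ ^ 8 = (τ ^ 4)⁻¹ * theta₂PowEight (-1 / τ) := by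
  have hexponent : ((8 : ℕ) : ℂ) * (-π * Complex.I * (1 / 2) ^ 2 / τ) =
      2 * π * Complex.I * (-1 / τ) := by
    push_cast
    field_simp
    ring
  rw [jacobiTheta₂_functional_equation, mul_pow, mul_pow, one_div_cpow_half_pow_eight,
    theta₂PowEight, ← Complex.exp_nat_mul, hexponent, ← jacobiTheta₂_neg_left, mul_assoc,
    show -(1 / 2 / τ) = -1 / τ / 2 by field_simp]

lemma theta₂PowEight_eq {τ : ℂ} (hτ : τ ≠ 0) :
    theta₂PowEight τ = (τ ^ 4)⁻¹ * jacobiTheta₂ (1 / 2) (-1 / τ) ^ 8 := by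
  have h := jacobiTheta₂_half_pow_eight (div_ne_zero (neg_ne_zero.2 one_ne_zero) hτ)
  rw [div_div_eq_mul_div, neg_one_mul, neg_div_neg_eq, div_one] at h
  rw [h, div_pow, (by decide : Even 4).neg_one_pow]
  field_simp

/-- The symmetric combination `(θ₂⁸ + θ₃⁸ + θ₄⁸) / 2` of theta constants, which is the normalized
Eisenstein series of level one and weight four. -/
noncomputable def thetaEisenstein (τ : ℂ) : ℂ :=
  (theta₂PowEight τ + jacobiTheta₂ 0 τ ^ 8 + jacobiTheta₂ (1 / 2) τ ^ 8) / 2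

lemma thetaEisenstein_add_one (τ : ℂ) : thetaEisenstein (τ + 1) = thetaEisenstein τ := by
  rw [thetaEisenstein, thetaEisenstein, theta₂PowEight_add_one, jacobiTheta₂_add_one_right,
    jacobiTheta₂_add_one_right, show (1 / 2 + 1 / 2 : ℂ) = 0 + 1 by norm_num,
    jacobiTheta₂_add_left, zero_add]
  ring

lemma thetaEisenstein_neg_inv {τ : ℂ} (hτ : τ ≠ 0) :
    thetaEisenstein (-τ⁻¹) = τ ^ 4 * thetaEisenstein τ := by
  rw [thetaEisenstein, thetaEisenstein, jacobiTheta₂_zero_pow_eight τ,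
    jacobiTheta₂_half_pow_eight hτ, theta₂PowEight_eq hτ, neg_div, one_div]
  field_simp
  ring

lemma differentiableAt_thetaEisenstein {τ : ℂ} (hτ : 0 < τ.im) :
    DifferentiableAt ℂ thetaEisenstein τ := by
  have hhalf : DifferentiableAt ℂ (fun τ : ℂ => jacobiTheta₂ (τ / 2) τ) τ :=
    ((hasFDerivAt_jacobiTheta₂ (τ / 2) hτ).differentiableAt.comp τ
      (f := fun τ : ℂ => (τ / 2, τ)) (by fun_prop) :)
  have h₃ := differentiableAt_jacobiTheta₂_snd 0 hτ
  have h₄ := differentiableAt_jacobiTheta₂_snd (1 / 2) hτ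
  unfold thetaEisenstein theta₂PowEight
  fun_prop

lemma norm_jacobiTheta₂_half_mul_le {τ : ℂ} (hτ : 1 ≤ τ.im) :
    ‖jacobiTheta₂ (τ / 2) τ‖ ≤ ∑' n : ℤ, ‖jacobiTheta₂_term n (Complex.I / 2) Complex.I‖ := by
  have hsummable := ((summable_jacobiTheta₂_term_iff (Complex.I / 2) Complex.I).mpr (by simp)).norm
  refine tsum_of_norm_bounded hsummable.hasSum fun n => ?_
  have hn : (0 : ℝ) ≤ (n : ℝ) ^ 2 + n := by
    have : 0 ≤ n ^ 2 + n := by nlinarith [Int.le_self_sq (-n)]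
    exact_mod_cast this
  rw [norm_jacobiTheta₂_term, norm_jacobiTheta₂_term, Real.exp_le_exp, Complex.div_ofNat_im,
    Complex.div_ofNat_im, Complex.I_im]
  nlinarith [mul_nonneg Real.pi_pos.le hn]

section LevelOne

open UpperHalfPlane ModularForm MatrixGroups

lemma tendsto_jacobiTheta₂_zero_atImInfty :
    Tendsto (fun τ : ℍ => jacobiTheta₂ 0 τ) atImInfty (𝓝 1) := by
  have hcoe : Tendsto (fun τ : ℍ => (τ : ℂ)) atImInfty (comap Complex.im atTop) :=
    tendsto_comap_iff.2 tendsto_comap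
  have hexp : Tendsto (fun τ : ℂ => Real.exp (-π * τ.im)) (comap Complex.im atTop) (𝓝 0) :=
    ((Real.tendsto_exp_neg_atTop_nhds_zero.comp
      (tendsto_id.const_mul_atTop Real.pi_pos)).comp tendsto_comap).congr fun τ => by simp
  simpa [jacobiTheta_eq_jacobiTheta₂, Function.comp_def] using
    ((isBigO_at_im_infty_jacobiTheta_sub_one.trans_tendsto hexp).comp hcoe).add_const 1

lemma tendsto_jacobiTheta₂_half_atImInfty :
    Tendsto (fun τ : ℍ => jacobiTheta₂ (1 / 2) τ) atImInfty (𝓝 1) := by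
  have hshift : Tendsto (fun τ : ℍ => (1 : ℝ) +ᵥ τ) atImInfty atImInfty :=
    tendsto_comap_iff.2 (tendsto_comap.congr fun τ => by simp)
  refine (tendsto_jacobiTheta₂_zero_atImInfty.comp hshift).congr fun τ => ?_
  rw [Function.comp_apply, coe_vadd, Complex.ofReal_one, add_comm, jacobiTheta₂_add_one_right,
    zero_add]

lemma tendsto_theta₂PowEight_atImInfty :
    Tendsto (fun τ : ℍ => theta₂PowEight τ) atImInfty (𝓝 0) := by
  have hexp : Tendsto (fun τ : ℍ => Complex.exp (2 * π * Complex.I * τ)) atImInfty (𝓝 0) := by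
    simpa [Function.Periodic.qParam] using qParam_tendsto_atImInfty one_pos
  refine hexp.zero_mul_isBoundedUnder_le (isBoundedUnder_of_eventually_le
    (a := (∑' n : ℤ, ‖jacobiTheta₂_term n (Complex.I / 2) Complex.I‖) ^ 8) ?_)
  filter_upwards [tendsto_comap.eventually_ge_atTop 1] with τ hτ
  rw [Function.comp_apply, norm_pow]
  exact pow_le_pow_left₀ (norm_nonneg _) (norm_jacobiTheta₂_half_mul_le hτ) 8

lemma tendsto_thetaEisenstein_atImInfty :
    Tendsto (fun τ : ℍ => thetaEisenstein τ) atImInfty (𝓝 1) := by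
  have h := ((tendsto_theta₂PowEight_atImInfty.add (tendsto_jacobiTheta₂_zero_atImInfty.pow 8)).add
    (tendsto_jacobiTheta₂_half_atImInfty.pow 8)).div_const 2
  norm_num at h
  simpa [thetaEisenstein] using h

lemma thetaEisenstein_slash_T :
    (fun τ : ℍ => thetaEisenstein τ) ∣[(4 : ℤ)] ModularGroup.T =
      fun τ : ℍ => thetaEisenstein τ := by
  ext τ
  rw [SL_slash_apply, ModularGroup.denom_apply, modular_T_smul]
  simp [ModularGroup.T, add_comm (1 : ℂ), thetaEisenstein_add_one]

lemma thetaEisenstein_slash_S :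
    (fun τ : ℍ => thetaEisenstein τ) ∣[(4 : ℤ)] ModularGroup.S =
      fun τ : ℍ => thetaEisenstein τ := by
  ext τ
  have hτ : (τ : ℂ) ≠ 0 := ne_zero τ
  suffices thetaEisenstein (-(τ : ℂ)⁻¹) * ((τ : ℂ) ^ 4)⁻¹ = thetaEisenstein τ by
    rw [SL_slash_apply, UpperHalfPlane.modular_S_smul]
    simpa [ModularGroup.denom_S] using! this
  rw [thetaEisenstein_neg_inv hτ]
  field_simp

/-- `thetaEisenstein` as a modular form of level one and weight four. -/
noncomputable def thetaEisensteinForm : ModularForm 𝒮ℒ 4 where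
  toFun τ := thetaEisenstein τ
  slash_action_eq' A hA := by
    obtain ⟨A, rfl⟩ := hA
    exact SlashInvariantForm.slash_action_generators_SL2Z thetaEisenstein_slash_S
      thetaEisenstein_slash_T A
  holo' := by
    rw [UpperHalfPlane.mdifferentiable_iff]
    refine .congr (fun z hz =>
      (differentiableAt_thetaEisenstein hz).differentiableWithinAt) fun z hz => ?_
    simp [ofComplex_apply_of_im_pos hz]
  bdd_at_cusps' hc := by
    rw [Subgroup.IsArithmetic.isCusp_iff_isCusp_SL2Z] at hc
    rw [OnePoint.isBoundedAt_iff_forall_SL2Z hc]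
    intro γ _
    rw [SlashInvariantForm.slash_action_generators_SL2Z thetaEisenstein_slash_S
      thetaEisenstein_slash_T]
    exact tendsto_thetaEisenstein_atImInfty.isBigO_one ℝ

lemma eq_E₄_of_tendsto_atImInfty {f : ModularForm 𝒮ℒ 4} (hf : Tendsto f atImInfty (𝓝 1)) :
    f = E₄ := by
  obtain ⟨c, rfl⟩ : ∃ c : ℂ, c • E₄ = f :=
    (finrank_eq_one_iff_of_nonzero' E₄ (EisensteinSeries.E_ne_zero _ ⟨2, rfl⟩)).mp
      (Module.rank_eq_one_iff_finrank_eq_one.mp levelOne_weight_four_rank_one) f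
  have hcoeff : (qExpansion 1 ⇑(c • E₄)).coeff 0 = 1 := by
    rw [qExpansion_coeff_zero one_pos
      (ModularFormClass.analyticAt_cuspFunction_zero _ one_pos one_mem_strictPeriods_SL)
      (SlashInvariantFormClass.periodic_comp_ofComplex _ one_mem_strictPeriods_SL)]
    exact hf.limUnder_eq
  have hc : c = 1 := by
    rw [FunLike.coe_smul, ModularForm.qExpansion_smul one_pos one_mem_strictPeriods_SL,
      PowerSeries.coeff_smul, EisensteinSeries.E_qExpansion_coeff_zero _ ⟨2, rfl⟩] at hcoeff
    simpa using hcoeff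
  rw [hc, one_smul]

lemma E₄_eq_thetaEisenstein (τ : ℍ) : E₄ τ = thetaEisenstein τ :=
  (DFunLike.congr_fun (eq_E₄_of_tendsto_atImInfty (f := thetaEisensteinForm)
    tendsto_thetaEisenstein_atImInfty) τ).symm

lemma tsum_eisSummand_four (τ : ℍ) :
    ∑' v, EisensteinSeries.eisSummand 4 v τ = π ^ 4 / 45 * thetaEisenstein τ := by
  have hzeta := tsum_eisSummand_eq_riemannZeta_mul_eisensteinSeries (k := 4) (by norm_num) τ
  have hE₄ : E₄ τ = 1 / 2 * eisensteinSeries (N := 1) 0 4 τ := rfl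
  rw [E₄_eq_thetaEisenstein] at hE₄
  push_cast at hzeta
  rw [hzeta, hE₄, riemannZeta_four]
  ring

end LevelOne
/-! ### The theta constants at `i√2` -/

lemma jacobiTheta₂_zero_I_mul (s : ℝ) : jacobiTheta₂ 0 (Complex.I * s) = (theta₃ 0 s : ℂ) := by
  rw [theta₃_zero_eq, Complex.ofReal_tsum, jacobiTheta₂]
  refine tsum_congr fun n => ?_
  rw [jacobiTheta₂_term, Complex.ofReal_exp]
  congr 1
  push_cast
  linear_combination (π * n ^ 2 * s : ℂ) * Complex.I_sq

lemma jacobiTheta₂_half_I_mul (s : ℝ) :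
    jacobiTheta₂ (1 / 2) (Complex.I * s) = (theta₄ 0 s : ℂ) := by
  rw [theta₄_zero_eq, Complex.ofReal_tsum, jacobiTheta₂]
  refine tsum_congr fun n => ?_
  have hsign : Complex.exp (2 * π * Complex.I * n * (1 / 2)) = ((-1 : ℝ) ^ n : ℝ) := by
    rw [show (2 * π * Complex.I * n * (1 / 2) : ℂ) = n * (π * Complex.I) by ring,
      Complex.exp_int_mul, Complex.exp_pi_mul_I]
    push_cast
    rfl
  rw [jacobiTheta₂_term, Complex.exp_add, hsign, Complex.ofReal_mul, Complex.ofReal_exp]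
  congr 2
  push_cast
  linear_combination (π * n ^ 2 * s : ℂ) * Complex.I_sq

lemma theta₂PowEight_I_mul {s : ℝ} (hs : s ≠ 0) :
    theta₂PowEight (Complex.I * s) = ((s ^ 4)⁻¹ * theta₄ 0 s⁻¹ ^ 8 : ℝ) := by
  have hs' : (s : ℂ) ≠ 0 := Complex.ofReal_ne_zero.2 hs
  have hneg_inv : -1 / (Complex.I * s) = Complex.I * (s⁻¹ : ℝ) := by
    push_cast
    field_simp
    rw [Complex.I_sq]
  rw [theta₂PowEight_eq (mul_ne_zero Complex.I_ne_zero hs'), hneg_inv, jacobiTheta₂_half_I_mul,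
    mul_pow, Complex.I_pow_four]
  push_cast
  ring

lemma theta₃_inv_sqrt_two_sq : theta₃ 0 (√2)⁻¹ ^ 2 = √2 * theta₃ 0 √2 ^ 2 := by
  rw [theta₃_inv (by positivity), mul_pow, Real.sq_sqrt (by positivity)]

lemma theta₄_inv_sqrt_two_sq : theta₄ 0 (√2)⁻¹ ^ 2 = (2 - √2) * theta₃ 0 √2 ^ 2 := by
  have h := theta₃_sq_add_theta₄_sq (s := (√2)⁻¹) (by positivity)
  rw [← div_eq_mul_inv, Real.div_sqrt, theta₃_inv_sqrt_two_sq] at h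
  linear_combination h

lemma theta₄_sqrt_two_pow_four : theta₄ 0 √2 ^ 4 = (2 * √2 - 2) * theta₃ 0 √2 ^ 4 := by
  have hmul := theta₃_mul_theta₄ (s := (√2)⁻¹) (by positivity)
  rw [← div_eq_mul_inv, Real.div_sqrt] at hmul
  calc theta₄ 0 √2 ^ 4 = theta₃ 0 (√2)⁻¹ ^ 2 * theta₄ 0 (√2)⁻¹ ^ 2 := by
        rw [← mul_pow, hmul]
        ring
    _ = (2 * √2 - 2) * theta₃ 0 √2 ^ 4 := by
        rw [theta₃_inv_sqrt_two_sq, theta₄_inv_sqrt_two_sq]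
        linear_combination (-theta₃ 0 √2 ^ 4) * Real.sq_sqrt zero_le_two

lemma thetaEisenstein_I_mul_sqrt_two :
    thetaEisenstein (Complex.I * (√2 : ℝ)) = ((15 - 10 * √2) * theta₃ 0 √2 ^ 8 : ℝ) := by
  have hsq : √2 ^ 2 = 2 := Real.sq_sqrt zero_le_two
  have hfour : √2 ^ 4 = 4 := by linear_combination (√2 ^ 2 + 2) * hsq
  rw [thetaEisenstein, theta₂PowEight_I_mul (by positivity), jacobiTheta₂_zero_I_mul,
    jacobiTheta₂_half_I_mul]
  norm_cast
  rw [pow_mul (theta₄ 0 (√2)⁻¹) 2 4, pow_mul (theta₄ 0 √2) 4 2, theta₄_inv_sqrt_two_sq,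
    theta₄_sqrt_two_pow_four, hfour]
  linear_combination (√2 ^ 2 / 8 - √2 + 21 / 4) * theta₃ 0 √2 ^ 8 * hsq

/-! ### Gauss's integral for `θ₃(i√2)` -/

lemma integral_rpow_mul_one_sub_rpow {p q : ℝ} (hp : 0 < p) (hq : 0 < q) :
    ∫ t in Set.Ioo (0 : ℝ) 1, t ^ (p - 1) * (1 - t) ^ (q - 1) =
      Real.Gamma p * Real.Gamma q / Real.Gamma (p + q) := by
  rw [← ProbabilityTheory.beta, ProbabilityTheory.beta_eq_betaIntegralReal p q hp hq,
    Complex.betaIntegral, intervalIntegral.integral_of_le zero_le_one,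
    ← integral_Ioc_eq_integral_Ioo, ← Complex.ofReal_re (∫ t in _, _), ← integral_complex_ofReal]
  congr 1
  refine setIntegral_congr_fun measurableSet_Ioc fun t ht => ?_
  simp only [Complex.ofReal_mul, Complex.ofReal_cpow ht.1.le,
    Complex.ofReal_cpow (sub_nonneg.2 ht.2)]
  push_cast
  rfl

lemma image_div_one_add_Ioi : (fun t : ℝ => t / (1 + t)) '' Set.Ioi 0 = Set.Ioo 0 1 := by
  ext x
  constructor
  · rintro ⟨t, ht : 0 < t, rfl⟩
    exact ⟨by positivity, (div_lt_one (by positivity)).2 (lt_one_add t)⟩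
  · rintro ⟨hx₀, hx₁⟩
    have hsub : 0 < 1 - x := sub_pos.2 hx₁
    refine ⟨x / (1 - x), div_pos hx₀ hsub, ?_⟩
    field_simp
    ring

lemma injOn_div_one_add_Ioi : Set.InjOn (fun t : ℝ => t / (1 + t)) (Set.Ioi 0) := by
  intro a (ha : 0 < a) b (hb : 0 < b) hab
  have hcross := (div_eq_div_iff (by positivity) (by positivity)).1 hab
  linarith

lemma hasDerivAt_div_one_add {t : ℝ} (ht : 1 + t ≠ 0) :
    HasDerivAt (fun t : ℝ => t / (1 + t)) ((1 + t) ^ 2)⁻¹ t :=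
  ((hasDerivAt_id t).fun_div ((hasDerivAt_id t).const_add 1) ht).congr_deriv (by simp)

lemma integral_Ioo_zero_one_eq_integral_Ioi (f : ℝ → ℝ) :
    ∫ x in Set.Ioo (0 : ℝ) 1, f x =
      ∫ t in Set.Ioi (0 : ℝ), ((1 + t) ^ 2)⁻¹ * f (t / (1 + t)) := by
  rw [← image_div_one_add_Ioi, integral_image_eq_integral_abs_deriv_smul measurableSet_Ioi
    (fun t (ht : 0 < t) => (hasDerivAt_div_one_add (by positivity)).hasDerivWithinAt)
    injOn_div_one_add_Ioi]
  simp only [abs_inv, smul_eq_mul, abs_pow, sq_abs]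

lemma integral_rpow_mul_one_add_rpow {p q : ℝ} (hp : 0 < p) (hq : 0 < q) :
    ∫ t in Set.Ioi (0 : ℝ), t ^ (p - 1) * (1 + t) ^ (-(p + q)) =
      Real.Gamma p * Real.Gamma q / Real.Gamma (p + q) := by
  rw [← integral_rpow_mul_one_sub_rpow hp hq, integral_Ioo_zero_one_eq_integral_Ioi]
  refine setIntegral_congr_fun measurableSet_Ioi fun t (ht : 0 < t) => ?_
  have hw : 0 < 1 + t := by positivity
  have hsub : 1 - t / (1 + t) = (1 + t)⁻¹ := by
    field_simp
    ring
  rw [hsub, Real.div_rpow ht.le hw.le, Real.inv_rpow hw.le, ← Real.rpow_two, div_eq_mul_inv,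
    ← Real.rpow_neg hw.le, ← Real.rpow_neg hw.le, ← Real.rpow_neg hw.le,
    show -(p + q) = -2 + (-(p - 1) + -(q - 1)) by ring, Real.rpow_add hw, Real.rpow_add hw]
  ring

lemma integral_rpow_mul_one_add_rpow_rpow {a p q : ℝ} (ha : 0 < a) (hp : 0 < p) (hq : 0 < q) :
    ∫ u in Set.Ioi (0 : ℝ), u ^ (a * p - 1) * (1 + u ^ a) ^ (-(p + q)) =
      Real.Gamma p * Real.Gamma q / (a * Real.Gamma (p + q)) := by
  rw [div_mul_eq_div_div_swap, ← integral_rpow_mul_one_add_rpow hp hq,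
    ← integral_comp_rpow_Ioi_of_pos (g := fun t => t ^ (p - 1) * (1 + t) ^ (-(p + q))) ha,
    div_eq_inv_mul, ← integral_const_mul]
  refine setIntegral_congr_fun measurableSet_Ioi fun u (hu : 0 < u) => ?_
  simp only [smul_eq_mul]
  rw [← Real.rpow_mul hu.le, show a * p - 1 = (a - 1) + a * (p - 1) by ring, Real.rpow_add hu]
  field_simp

lemma integrableOn_rpow_mul_one_add_rpow_rpow {a p q : ℝ} (ha : 0 < a) (hp : 0 < p)
    (hq : 0 < q) :
    IntegrableOn (fun u : ℝ => u ^ (a * p - 1) * (1 + u ^ a) ^ (-(p + q))) (Set.Ioi 0) := by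
  refine not_imp_comm.1 integral_undef ?_
  rw [integral_rpow_mul_one_add_rpow_rpow ha hp hq]
  have := Real.Gamma_pos_of_pos hp
  have := Real.Gamma_pos_of_pos hq
  have := Real.Gamma_pos_of_pos (add_pos hp hq)
  positivity

lemma integral_one_add_sq_div_sqrt_one_add_pow_eight :
    ∫ u in Set.Ioi (0 : ℝ), (1 + u ^ 2) / √(1 + u ^ 8) =
      Real.Gamma (1 / 8) * Real.Gamma (3 / 8) / (4 * √π) := by
  have h8 : (0 : ℝ) < 8 := by norm_num
  have hp : (0 : ℝ) < 1 / 8 := by norm_num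
  have hq : (0 : ℝ) < 3 / 8 := by norm_num
  have hsum : (1 / 8 + 3 / 8 : ℝ) = 1 / 2 := by norm_num
  have hadd := integral_add (integrableOn_rpow_mul_one_add_rpow_rpow h8 hp hq)
    (integrableOn_rpow_mul_one_add_rpow_rpow h8 hq hp)
  rw [integral_rpow_mul_one_add_rpow_rpow h8 hp hq, integral_rpow_mul_one_add_rpow_rpow h8 hq hp,
    add_comm (3 / 8 : ℝ), hsum, Real.Gamma_one_half_eq] at hadd
  calc ∫ u in Set.Ioi (0 : ℝ), (1 + u ^ 2) / √(1 + u ^ 8)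
    _ = ∫ u in Set.Ioi (0 : ℝ), (u ^ (8 * (1 / 8) - 1 : ℝ) * (1 + u ^ (8 : ℝ)) ^ (-(1 / 2) : ℝ) +
          u ^ (8 * (3 / 8) - 1 : ℝ) * (1 + u ^ (8 : ℝ)) ^ (-(1 / 2) : ℝ)) := by
        refine setIntegral_congr_fun measurableSet_Ioi fun u _ => ?_
        have hw : 0 ≤ 1 + u ^ 8 := by positivity
        norm_num
        rw [Real.rpow_neg hw, ← Real.sqrt_eq_rpow]
        field_simp
    _ = Real.Gamma (1 / 8) * Real.Gamma (3 / 8) / (4 * √π) := by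
        rw [hadd]
        field_simp
        ring

lemma sqrt_two_lt_two : √2 < 2 := by
  rw [Real.sqrt_lt' two_pos]
  norm_num

-- The substitution `v = u - 1 / u` turns `(v² + 2)² - 2` into `(1 + u⁸) / u⁴`.
lemma agmIntegral_sqrt_two_add_two_sub :
    agmIntegral √(2 + √2) √(2 - √2) =
      Real.Gamma (1 / 8) * Real.Gamma (3 / 8) / (8 * √π) := by
  have hintegrand : ∀ u ∈ Set.Ioi (0 : ℝ), (1 + 1 / u ^ 2) * (1 /
      √(((u - 1 / u) ^ 2 + (2 + √2)) * ((u - 1 / u) ^ 2 + (2 - √2)))) =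
      (1 + u ^ 2) / √(1 + u ^ 8) := by
    intro u (hu : 0 < u)
    have hquartic : ((u - 1 / u) ^ 2 + (2 + √2)) * ((u - 1 / u) ^ 2 + (2 - √2)) =
        (1 + u ^ 8) / (u ^ 2) ^ 2 := by
      field_simp
      linear_combination (-u ^ 4) * Real.sq_sqrt zero_le_two
    rw [hquartic, Real.sqrt_div (by positivity), Real.sqrt_sq (by positivity)]
    field_simp
    ring
  have h := two_mul_agmIntegral √(2 + √2) √(2 - √2)
  rw [integral_eq_integral_Ioi_sub_div _ one_pos, Real.sq_sqrt (by positivity),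
    Real.sq_sqrt (sub_pos.2 sqrt_two_lt_two).le, setIntegral_congr_fun measurableSet_Ioi hintegrand,
    integral_one_add_sq_div_sqrt_one_add_pow_eight] at h
  rw [eq_div_of_mul_eq two_ne_zero ((mul_comm _ _).trans h)]
  field_simp
  norm_num

lemma sqrt_two_sub_sqrt_two : √(2 - √2) = (√2 - 1) * √(2 + √2) := by
  have hsq : √2 ^ 2 = 2 := Real.sq_sqrt zero_le_two
  have hone : 0 ≤ √2 - 1 := sub_nonneg.2 (Real.one_le_sqrt.2 one_le_two)
  rw [show 2 - √2 = (√2 - 1) ^ 2 * (2 + √2) by linear_combination (-√2) * hsq,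
    Real.sqrt_mul (sq_nonneg _), Real.sqrt_sq hone]

lemma theta₃_sqrt_two_sq :
    theta₃ 0 √2 ^ 2 =
      √(2 + √2) * (Real.Gamma (1 / 8) * Real.Gamma (3 / 8)) / (4 * √2 * π * √π) := by
  have hsq : √2 ^ 2 = 2 := Real.sq_sqrt zero_le_two
  have hpos : 0 < theta₃ 0 √2 := theta₃_pos (by positivity)
  have htheta := agmIntegral_theta₃_sq_theta₄_sq (s := (√2)⁻¹) (by positivity)
  have hscale := agmIntegral_mul_mul (t := √2 * theta₃ 0 √2 ^ 2 / √(2 + √2)) (by positivity)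
    √(2 + √2) √(2 - √2)
  have h₃ : √2 * theta₃ 0 √2 ^ 2 / √(2 + √2) * √(2 + √2) = theta₃ 0 (√2)⁻¹ ^ 2 := by
    rw [theta₃_inv_sqrt_two_sq]
    field_simp
  have h₄ : √2 * theta₃ 0 √2 ^ 2 / √(2 + √2) * √(2 - √2) = theta₄ 0 (√2)⁻¹ ^ 2 := by
    rw [theta₄_inv_sqrt_two_sq, sqrt_two_sub_sqrt_two]
    field_simp
    linear_combination hsq
  rw [h₃, h₄, htheta, agmIntegral_sqrt_two_add_two_sub] at hscale
  field_simp at hscale ⊢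
  linarith

lemma theta₃_sqrt_two_pow_eight :
    theta₃ 0 √2 ^ 8 =
      (2 + √2) ^ 2 * (Real.Gamma (1 / 8) * Real.Gamma (3 / 8)) ^ 4 / (1024 * π ^ 6) := by
  rw [pow_mul (theta₃ 0 √2) 2 4, theta₃_sqrt_two_sq]
  simp only [div_pow, mul_pow]
  rw [pow_mul √(2 + √2) 2 2, Real.sq_sqrt (by positivity), pow_mul √2 2 2,
    Real.sq_sqrt zero_le_two, pow_mul √π 2 2, Real.sq_sqrt Real.pi_pos.le]
  field_simp
  norm_num

lemma integral_pow_three_mul_thetaBracket :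
    ∫ u in Set.Ioi (0 : ℝ), u ^ 3 * thetaBracket u =
      (Real.Gamma (1 / 8) * Real.Gamma (3 / 8)) ^ 4 / (768 * π ^ 6) := by
  have htwo : √2 ^ 2 = 2 := Real.sq_sqrt zero_le_two
  have hlattice : ∫ u in Set.Ioi (0 : ℝ), u ^ 3 * thetaBracket u =
      6 / π ^ 4 * (∑' v, EisensteinSeries.eisSummand 4 v iSqrtTwo).re := by
    rw [setIntegral_congr_fun measurableSet_Ioi fun u hu =>
      congrArg (u ^ 3 * ·) (thetaBracket_eq_harmonicTheta hu)]
    exact integral_pow_mul_harmonicTheta (k := 4) (by norm_num) iSqrtTwo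
  have heisenstein : ∑' v, EisensteinSeries.eisSummand 4 v iSqrtTwo =
      ((π ^ 4 / 45 * ((15 - 10 * √2) * theta₃ 0 √2 ^ 8) : ℝ) : ℂ) := by
    rw [tsum_eisSummand_four, Complex.ofReal_mul, ← thetaEisenstein_I_mul_sqrt_two]
    push_cast
    rfl
  have hcoeff : (15 - 10 * √2) * (2 + √2) ^ 2 = 10 := by
    linear_combination (-10 * √2 - 25) * htwo
  rw [hlattice, heisenstein, Complex.ofReal_re, theta₃_sqrt_two_pow_eight, mul_div_assoc,
    ← mul_assoc _ ((2 + √2) ^ 2), hcoeff]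
  field_simp
  norm_num

theorem stmt_19 :
    ∫ k in (0:ℝ)..(1:ℝ), (2 + 3 * k - k^2) / Real.sqrt (1 + k) * (EllK k)^3
      = Real.Gamma (1/8) ^ 4 * Real.Gamma (3/8) ^ 4 / (384 * Real.sqrt 2 * π^2) := by
  have htwo : √2 ^ 2 = 2 := Real.sq_sqrt zero_le_two
  rw [integral_EllK_eq_integral_thetaBracket, integral_thetaBracket,
    integral_pow_three_mul_thetaBracket]
  field_simp
  linear_combination 384 * htwo
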